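/- Let d ≥ 1, let α = (α_1,…,α_d) be a multi-index with α_j > −1/2 for each j, and let 0 < λ < β < 1. Set c_λ = ∫_0^∞ u^{−λ−1}(e^{−u}−1) du (a finite nonzero constant) and define the Laguerre fractional derivative D_λ^α f(x) = (1/c_λ) ∫_0^∞ s^{−λ−1} (P_s^α f(x) − f(x)) ds. Then there exists C > 0, depending only on α, d, β, λ, such that for every bounded measurable f on (0,∞)^d satisfying sup_x |∂_t P_t^α f(x)| ≤ A t^{β−1} for all t > 0, one has: sup_x |D_λ^α f(x)| ≤ C (∥f∥_∞ + A), and sup_x |∂_t P_t^α(D_λ^α f)(x)| ≤ C (∥f∥_∞ + A) t^{β−λ−1} for all t > 0. In particular D_λ^α maps Lip_β(μ_α) boundedly into Lip_{β−λ}(μ_α). -/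

import Mathlib

open MeasureTheory Real Set

noncomputable def besselI (ν z : ℝ) : ℝ :=
  ∑' m : ℕ, (z / 2) ^ (2 * (m : ℝ) + ν) / (Nat.factorial m * Real.Gamma ((m : ℝ) + ν + 1))

/-- The positive orthant `(0,∞)^d`. -/
def posOrthant (d : ℕ) : Set (Fin d → ℝ) := Set.univ.pi fun _ => Set.Ioi 0

/-- The Poisson–Laguerre kernel `p_t^α(x,y)`. -/
noncomputable def plKernel (d : ℕ) (α : Fin d → ℝ) (t : ℝ) (x y : Fin d → ℝ) : ℝ :=
  (1 / (2 * Real.sqrt π)) *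
    ∫ r in Set.Ioo (0 : ℝ) 1,
      (t * Real.exp (t ^ 2 / (4 * Real.log r)) /
          ((1 - r) ^ d * (-Real.log r) ^ ((3 : ℝ) / 2))) *
        (∏ j, (y j / x j) ^ (α j / 2) *
            Real.exp (-((r * x j + y j) / (1 - r)) - α j * Real.log r / 2) *
            besselI (α j) (2 * Real.sqrt (r * x j * y j) / (1 - r))) / r

/-- The Poisson–Laguerre semigroup `P_t^α f`, with the convention `P_0^α f = f`. -/
noncomputable def plP (d : ℕ) (α : Fin d → ℝ) (t : ℝ)
    (f : (Fin d → ℝ) → ℝ) (x : Fin d → ℝ) : ℝ :=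
  if t = 0 then f x else ∫ y in posOrthant d, plKernel d α t x y * f y

/-- The Laguerre fractional derivative `D_λ^α f` for `0 < λ < 1`. -/
noncomputable def laguerreFracDeriv (d : ℕ) (α : Fin d → ℝ) (lam : ℝ)
    (f : (Fin d → ℝ) → ℝ) (x : Fin d → ℝ) : ℝ :=
  (1 / ∫ u in Set.Ioi (0 : ℝ), u ^ (-lam - 1) * (Real.exp (-u) - 1)) *
    ∫ s in Set.Ioi (0 : ℝ), s ^ (-lam - 1) * (plP d α s f x - f x)

/-!
Expanding the Bessel functions exhibits the Laguerre heat kernel as a Poisson mixture of Gamma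
densities, so its Laplace transform is explicit; uniqueness of Laplace transforms then yields the
Chapman–Kolmogorov equation. Substituting `r = e^{-u}` in `p_t^α` subordinates the Poisson–Laguerre
semigroup to the heat semigroup through the one-sided `1/2`-stable (Lévy) law, and it inherits the
semigroup law, the contraction property and `|∂_t P_t f| ≤ 2 ‖f‖_∞ / t`.

The hypothesis on `∂_t P_t f` forces `P_t f` to converge pointwise as `t → 0`, at rate `t^β`. Heat
kernels are symmetric with respect to the weight `∏ x_j^{α_j} e^{-x_j}`, and this duality identifies
the limit with `f` almost everywhere. Hence `|P_s f - f| ≲ min(A s^β, ‖f‖_∞)`, which bounds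
`D_λ f` and justifies `P_t D_λ f = c_λ⁻¹ ∫ s^{-λ-1} (P_{t+s} f - P_t f) ds`. For the derivative in
`t`, write `P_{τ+s} f - P_τ f = P_{τ-q} (P_{q+s} f - P_q f)` with `q` comparable to `t`: second
differences are bounded by `A q^{β-1} min(1, s/q) |τ - t|`, whose integral against `s^{-λ-1}` is of
order `A t^{β-λ-1} |τ - t|`.
-/

/-! ### Uniqueness of the Laplace transform -/

open scoped NNReal BoundedContinuousFunction in
theorem measure_eq_of_integral_eq_on_separating_submonoid {E : Type*} [TopologicalSpace E]
    [PolishSpace E] [MeasurableSpace E] [BorelSpace E] {μ ν : Measure E} [IsFiniteMeasure μ]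
    [IsFiniteMeasure ν] (S : Submonoid (E →ᵇ ℝ))
    (hsep : ∀ x y, x ≠ y → ∃ g ∈ S, g x ≠ g y)
    (h : ∀ g ∈ S, ∫ x, g x ∂μ = ∫ x, g x ∂ν) : μ = ν := by
  let A : StarSubalgebra ℝ (E →ᵇ ℝ) :=
    { Algebra.adjoin ℝ (S : Set (E →ᵇ ℝ)) with
      star_mem' := fun {a} ha => by
        rwa [show star a = a by ext x; simp] }
  refine ext_of_forall_mem_subalgebra_integral_eq_of_polish (𝕜 := ℝ) (A := A) ?_ fun g hg => ?_
  · intro x y hxy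
    obtain ⟨g, hg, hne⟩ := hsep x y hxy
    exact ⟨g, ⟨BoundedContinuousFunction.toContinuousMapStarₐ ℝ g,
      ⟨g, Algebra.subset_adjoin hg, rfl⟩, rfl⟩, hne⟩
  · have hspan : g ∈ Submodule.span ℝ (S : Set (E →ᵇ ℝ)) := by
      have hadj : g ∈ Subalgebra.toSubmodule (Algebra.adjoin ℝ (S : Set (E →ᵇ ℝ))) := hg
      rwa [Algebra.adjoin_eq_span, Submonoid.closure_eq] at hadj
    clear hg
    induction hspan using Submodule.span_induction with
    | mem x hx => exact h x hx
    | zero => simp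
    | add x y _ _ hx hy =>
      simp only [BoundedContinuousFunction.coe_add, Pi.add_apply]
      rw [integral_add (x.integrable _) (y.integrable _),
        integral_add (x.integrable _) (y.integrable _), hx, hy]
    | smul a x _ hx =>
      simp only [BoundedContinuousFunction.coe_smul, smul_eq_mul]
      rw [integral_const_mul, integral_const_mul, hx]

theorem abs_exp_neg_sum_mul_le_one {ι : Type*} [Fintype ι] {s y : ι → ℝ} (hs : ∀ j, 0 ≤ s j)
    (hy : ∀ j, 0 ≤ y j) : |Real.exp (-∑ j, s j * y j)| ≤ 1 := by
  rw [Real.abs_exp, Real.exp_le_one_iff, neg_nonpos]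
  exact Finset.sum_nonneg fun j _ => mul_nonneg (hs j) (hy j)

open scoped NNReal BoundedContinuousFunction in
/-- The submonoid of bounded continuous functions on the closed orthant formed by the exponentials
`z ↦ exp (-∑ j, s j * z j)`, the test functions of the Laplace transform. The orthant is encoded as
`ι → ℝ≥0` so that these functions are bounded. -/
noncomputable def expNegSubmonoid (ι : Type*) [Fintype ι] : Submonoid ((ι → ℝ≥0) →ᵇ ℝ) where
  carrier := Set.range fun s : ι → ℝ≥0 =>
    BoundedContinuousFunction.ofNormedAddCommGroup
      (fun z : ι → ℝ≥0 => Real.exp (-∑ j, (s j : ℝ) * z j)) (by fun_prop) 1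
      fun z => abs_exp_neg_sum_mul_le_one (fun j => (s j).2) fun j => (z j).2
  one_mem' := ⟨0, by ext z; simp⟩
  mul_mem' := by
    rintro _ _ ⟨s, rfl⟩ ⟨t, rfl⟩
    refine ⟨s + t, ?_⟩
    ext z
    simp [← Real.exp_add, add_mul, Finset.sum_add_distrib, add_comm]

open scoped NNReal in
theorem measure_eq_of_laplace_nnreal {ι : Type*} [Fintype ι] {μ ν : Measure (ι → ℝ≥0)}
    [IsFiniteMeasure μ] [IsFiniteMeasure ν]
    (h : ∀ s : ι → ℝ≥0,
      ∫ z, Real.exp (-∑ j, (s j : ℝ) * z j) ∂μ = ∫ z, Real.exp (-∑ j, (s j : ℝ) * z j) ∂ν) :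
    μ = ν := by
  refine measure_eq_of_integral_eq_on_separating_submonoid (expNegSubmonoid ι) ?_ ?_
  · intro x y hxy
    classical
    obtain ⟨j, hj⟩ := Function.ne_iff.mp hxy
    refine ⟨_, ⟨Pi.single j 1, rfl⟩, ?_⟩
    simpa [Pi.single_apply, apply_ite NNReal.toReal, ite_mul] using hj
  · rintro _ ⟨s, rfl⟩
    exact h s

open scoped NNReal in
theorem measure_eq_of_laplace {ι : Type*} [Fintype ι] {μ ν : Measure (ι → ℝ)}
    [IsFiniteMeasure μ] [IsFiniteMeasure ν] (hμ : ∀ᵐ y ∂μ, ∀ j, 0 ≤ y j)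
    (hν : ∀ᵐ y ∂ν, ∀ j, 0 ≤ y j)
    (h : ∀ s : ι → ℝ, (∀ j, 0 ≤ s j) →
      ∫ y, Real.exp (-∑ j, s j * y j) ∂μ = ∫ y, Real.exp (-∑ j, s j * y j) ∂ν) : μ = ν := by
  let toNN : (ι → ℝ) → ι → ℝ≥0 := fun y j => (y j).toNNReal
  let coe : (ι → ℝ≥0) → ι → ℝ := fun z j => z j
  have measurable_toNN : Measurable toNN := by fun_prop
  have measurable_coe : Measurable coe := by fun_prop
  have map_coe_map_toNN : ∀ ρ : Measure (ι → ℝ), (∀ᵐ y ∂ρ, ∀ j, 0 ≤ y j) →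
      (ρ.map toNN).map coe = ρ := by
    intro ρ hρ
    rw [Measure.map_map measurable_coe measurable_toNN]
    conv_rhs => rw [← Measure.map_id (μ := ρ)]
    refine Measure.map_congr ?_
    filter_upwards [hρ] with y hy
    ext j
    simp [toNN, coe, hy j]
  have integral_map_toNN : ∀ ρ : Measure (ι → ℝ), (∀ᵐ y ∂ρ, ∀ j, 0 ≤ y j) → ∀ s : ι → ℝ≥0,
      ∫ z, Real.exp (-∑ j, (s j : ℝ) * z j) ∂(ρ.map toNN)
        = ∫ y, Real.exp (-∑ j, (s j : ℝ) * y j) ∂ρ := by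
    intro ρ hρ s
    rw [integral_map measurable_toNN.aemeasurable (Continuous.aestronglyMeasurable (by fun_prop))]
    refine integral_congr_ae ?_
    filter_upwards [hρ] with y hy
    simp [toNN, hy]
  rw [← map_coe_map_toNN μ hμ, ← map_coe_map_toNN ν hν]
  congr 1
  refine measure_eq_of_laplace_nnreal fun s => ?_
  rw [integral_map_toNN μ hμ, integral_map_toNN ν hν]
  exact h (fun j => s j) fun j => (s j).2

theorem measure_eq_of_laplace_real {μ ν : Measure ℝ}
    [IsFiniteMeasure μ] [IsFiniteMeasure ν] (hμ : ∀ᵐ y ∂μ, 0 ≤ y) (hν : ∀ᵐ y ∂ν, 0 ≤ y)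
    (h : ∀ s : ℝ, 0 ≤ s → ∫ y, Real.exp (-(s * y)) ∂μ = ∫ y, Real.exp (-(s * y)) ∂ν) :
    μ = ν := by
  let e : ℝ ≃ᵐ (Unit → ℝ) := (MeasurableEquiv.funUnique Unit ℝ).symm
  refine e.map_measurableEquiv_injective (measure_eq_of_laplace ?_ ?_ fun s hs => ?_)
  · exact (ae_map_iff e.measurable.aemeasurable (by measurability)).2 (hμ.mono fun y hy _ => hy)
  · exact (ae_map_iff e.measurable.aemeasurable (by measurability)).2 (hν.mono fun y hy _ => hy)
  · rw [integral_map_equiv, integral_map_equiv]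
    simpa [e] using h (s ()) (hs ())

theorem ae_eq_of_laplace_of_nonneg {ι : Type*} [Fintype ι] {ρ : Measure (ι → ℝ)}
    (hρ : ∀ᵐ y ∂ρ, ∀ j, 0 ≤ y j) {v w : (ι → ℝ) → ℝ} (hv : Integrable v ρ) (hw : Integrable w ρ)
    (hv0 : 0 ≤ᵐ[ρ] v) (hw0 : 0 ≤ᵐ[ρ] w)
    (h : ∀ s : ι → ℝ, (∀ j, 0 ≤ s j) →
      ∫ y, v y * Real.exp (-∑ j, s j * y j) ∂ρ = ∫ y, w y * Real.exp (-∑ j, s j * y j) ∂ρ) :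
    v =ᵐ[ρ] w := by
  have := isFiniteMeasure_withDensity_ofReal hv.2
  have := isFiniteMeasure_withDensity_ofReal hw.2
  have integral_withDensity : ∀ g : (ι → ℝ) → ℝ, Integrable g ρ → 0 ≤ᵐ[ρ] g → ∀ s : ι → ℝ,
      ∫ y, Real.exp (-∑ j, s j * y j) ∂(ρ.withDensity fun y => ENNReal.ofReal (g y))
        = ∫ y, g y * Real.exp (-∑ j, s j * y j) ∂ρ := by
    intro g hg hg0 s
    rw [integral_withDensity_eq_integral_toReal_smul₀ hg.1.aemeasurable.ennreal_ofReal (by simp)]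
    refine integral_congr_ae ?_
    filter_upwards [hg0] with y hy
    rw [ENNReal.toReal_ofReal hy, smul_eq_mul]
  have hdens : (ρ.withDensity fun y => ENNReal.ofReal (v y))
      = ρ.withDensity fun y => ENNReal.ofReal (w y) := by
    refine measure_eq_of_laplace ((withDensity_absolutelyContinuous _ _).ae_le hρ)
      ((withDensity_absolutelyContinuous _ _).ae_le hρ) fun s hs => ?_
    rw [integral_withDensity v hv hv0, integral_withDensity w hw hw0, h s hs]
  rw [withDensity_eq_iff hv.1.aemeasurable.ennreal_ofReal hw.1.aemeasurable.ennreal_ofReal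
    hv.lintegral_lt_top.ne] at hdens
  filter_upwards [hdens, hv0, hw0] with y hy h1 h2
  exact (ENNReal.ofReal_eq_ofReal_iff h1 h2).1 hy

theorem ae_eq_of_laplace {ι : Type*} [Fintype ι] {ρ : Measure (ι → ℝ)}
    (hρ : ∀ᵐ y ∂ρ, ∀ j, 0 ≤ y j) {v w : (ι → ℝ) → ℝ} (hv : Integrable v ρ) (hw : Integrable w ρ)
    (h : ∀ s : ι → ℝ, (∀ j, 0 ≤ s j) →
      ∫ y, v y * Real.exp (-∑ j, s j * y j) ∂ρ = ∫ y, w y * Real.exp (-∑ j, s j * y j) ∂ρ) :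
    v =ᵐ[ρ] w := by
  have integrable_mul_exp : ∀ g, Integrable g ρ → ∀ s : ι → ℝ, (∀ j, 0 ≤ s j) →
      Integrable (fun y => g y * Real.exp (-∑ j, s j * y j)) ρ := fun g hg s hs =>
    hg.mul_bdd (c := 1) (Continuous.aestronglyMeasurable (by fun_prop))
      (hρ.mono fun y hy => abs_exp_neg_sum_mul_le_one hs hy)
  -- `v = w` amounts to `v⁺ + w⁻ = w⁺ + v⁻`, an equality of nonnegative functions
  have hparts : (fun y => max (v y) 0 + max (-w y) 0)
      =ᵐ[ρ] fun y => max (w y) 0 + max (-v y) 0 := by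
    refine ae_eq_of_laplace_of_nonneg hρ (hv.pos_part.add hw.neg_part)
      (hw.pos_part.add hv.neg_part)
      (ae_of_all _ fun y => add_nonneg (le_max_right _ _) (le_max_right _ _))
      (ae_of_all _ fun y => add_nonneg (le_max_right _ _) (le_max_right _ _)) fun s hs => ?_
    simp only [add_mul]
    rw [integral_add (integrable_mul_exp _ hv.pos_part s hs)
        (integrable_mul_exp _ hw.neg_part s hs),
      integral_add (integrable_mul_exp _ hw.pos_part s hs)
        (integrable_mul_exp _ hv.neg_part s hs), ← sub_eq_sub_iff_add_eq_add,
      ← integral_sub (integrable_mul_exp _ hv.pos_part s hs)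
        (integrable_mul_exp _ hv.neg_part s hs),
      ← integral_sub (integrable_mul_exp _ hw.pos_part s hs)
        (integrable_mul_exp _ hw.neg_part s hs)]
    simpa only [← sub_mul, max_zero_sub_eq_self] using h s hs
  filter_upwards [hparts] with y hy
  linarith [max_zero_sub_eq_self (v y), max_zero_sub_eq_self (w y)]

/-! ### Probability densities and Markov kernels -/

/-- `k` is a probability density with respect to the measure `ν`; nonnegativity is required
everywhere rather than almost everywhere. -/
structure IsProbDensity {Y : Type*} [MeasurableSpace Y] (k : Y → ℝ) (ν : Measure Y) : Prop where
  nonneg : ∀ y, 0 ≤ k y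
  integrable : Integrable k ν
  integral_eq_one : ∫ y, k y ∂ν = 1

section Fubini

variable {X Y : Type*} [MeasurableSpace X] [MeasurableSpace Y] {μ : Measure X} {ν : Measure Y}
  [SFinite ν] {a : X → ℝ} {C : ℝ}

theorem integrable_uncurry_mul_of_integral_abs_le {G : X → Y → ℝ} (ha : Integrable a μ)
    (mG : Measurable (Function.uncurry G)) (hG : ∀ᵐ x ∂μ, Integrable (G x) ν)
    (hC : ∀ᵐ x ∂μ, ∫ y, |G x y| ∂ν ≤ C) :
    Integrable (Function.uncurry fun x y => a x * G x y) (μ.prod ν) := by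
  have hm : AEStronglyMeasurable (Function.uncurry fun x y => a x * G x y) (μ.prod ν) :=
    ha.1.comp_fst.mul mG.aestronglyMeasurable
  refine (integrable_prod_iff hm).2 ⟨hG.mono fun x hx => hx.const_mul (a x), ?_⟩
  refine (ha.norm.mul_const C).mono' hm.norm.integral_prod_right' ?_
  filter_upwards [hC] with x hx
  simp only [Function.uncurry_apply_pair, norm_mul, integral_const_mul, norm_norm,
    Real.norm_of_nonneg (integral_nonneg fun y => norm_nonneg (G x y))]
  exact mul_le_mul_of_nonneg_left hx (norm_nonneg _)

theorem integral_mul_integral_comm [SFinite μ] {G : X → Y → ℝ}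
    (h : Integrable (Function.uncurry fun x y => a x * G x y) (μ.prod ν)) :
    ∫ x, a x * ∫ y, G x y ∂ν ∂μ = ∫ y, ∫ x, a x * G x y ∂μ ∂ν := by
  simpa only [integral_const_mul] using integral_integral_swap h

end Fubini

namespace IsProbDensity

variable {X Y : Type*} [MeasurableSpace X] [MeasurableSpace Y] {μ : Measure X} {ν : Measure Y}
  {k g : Y → ℝ} {M : ℝ}

theorem abs_integral_mul_le (hk : IsProbDensity k ν) (hg : ∀ᵐ y ∂ν, |g y| ≤ M) :
    |∫ y, k y * g y ∂ν| ≤ M := by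
  calc |∫ y, k y * g y ∂ν| ≤ ∫ y, k y * M ∂ν := by
        refine (Real.norm_eq_abs _).ge.trans
          (norm_integral_le_of_norm_le (hk.integrable.mul_const M) ?_)
        filter_upwards [hg] with y hy
        rw [Real.norm_eq_abs, abs_mul, abs_of_nonneg (hk.nonneg y)]
        exact mul_le_mul_of_nonneg_left hy (hk.nonneg y)
    _ = M := by rw [integral_mul_const, hk.integral_eq_one, one_mul]

theorem integrable_mul (hk : IsProbDensity k ν) (mg : AEStronglyMeasurable g ν)
    (hg : ∀ᵐ y ∂ν, |g y| ≤ M) : Integrable (fun y => k y * g y) ν :=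
  hk.integrable.mul_bdd mg hg

theorem integral_abs_mul_le (hk : IsProbDensity k ν) (hg : ∀ᵐ y ∂ν, |g y| ≤ M) :
    ∫ y, |k y * g y| ∂ν ≤ M := by
  simp only [abs_mul, abs_of_nonneg (hk.nonneg _)]
  exact (le_abs_self _).trans (hk.abs_integral_mul_le (by simpa only [abs_abs] using hg))

theorem fintype_prod {ι : Type*} [Fintype ι] {Z : ι → Type*} [∀ j, MeasurableSpace (Z j)]
    {ρ : ∀ j, Measure (Z j)} [∀ j, SigmaFinite (ρ j)] {p : ∀ j, Z j → ℝ}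
    (hp : ∀ j, IsProbDensity (p j) (ρ j)) :
    IsProbDensity (fun z => ∏ j, p j (z j)) (Measure.pi ρ) where
  nonneg z := Finset.prod_nonneg fun j _ => (hp j).nonneg (z j)
  integrable := Integrable.fintype_prod_dep fun j => (hp j).integrable
  integral_eq_one := by
    rw [integral_fintype_prod_eq_prod]
    exact Finset.prod_eq_one fun j _ => (hp j).integral_eq_one

variable [SFinite ν] {a : X → ℝ} {κ : X → Y → ℝ}

theorem integrable_uncurry_mul {G : X → Y → ℝ} (ha : Integrable a μ)
    (mκ : Measurable (Function.uncurry κ)) (hκ : ∀ᵐ x ∂μ, IsProbDensity (κ x) ν)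
    (mG : Measurable (Function.uncurry G)) (hG : ∀ᵐ x ∂μ, ∀ᵐ y ∂ν, |G x y| ≤ M) :
    Integrable (Function.uncurry fun x y => a x * (κ x y * G x y)) (μ.prod ν) := by
  refine integrable_uncurry_mul_of_integral_abs_le (C := M) ha (mκ.mul mG) ?_ ?_
  · filter_upwards [hκ, hG] with x hx hGx
    exact hx.integrable_mul (mG.comp measurable_prodMk_left).aestronglyMeasurable hGx
  · filter_upwards [hκ, hG] with x hx hGx using hx.integral_abs_mul_le hGx

variable [SFinite μ]

theorem integral_mul_integral_comm (ha : Integrable a μ)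
    (mκ : Measurable (Function.uncurry κ)) (hκ : ∀ᵐ x ∂μ, IsProbDensity (κ x) ν)
    (mg : Measurable g) (hg : ∀ᵐ y ∂ν, |g y| ≤ M) :
    ∫ x, a x * ∫ y, κ x y * g y ∂ν ∂μ = ∫ y, (∫ x, a x * κ x y ∂μ) * g y ∂ν := by
  rw [_root_.integral_mul_integral_comm (integrable_uncurry_mul (G := fun _ y => g y) ha mκ hκ
    (mg.comp measurable_snd) (ae_of_all _ fun _ => hg))]
  simp only [← mul_assoc, integral_mul_const]

theorem mixture {p : X → ℝ} (hp : IsProbDensity p μ) (mκ : Measurable (Function.uncurry κ))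
    (hκ : ∀ᵐ x ∂μ, IsProbDensity (κ x) ν) : IsProbDensity (fun y => ∫ x, p x * κ x y ∂μ) ν := by
  have hint : Integrable (Function.uncurry fun x y => p x * κ x y) (μ.prod ν) := by
    simpa using integrable_uncurry_mul (G := fun _ _ => 1) (M := 1) hp.integrable mκ hκ
      measurable_const (ae_of_all _ fun _ => ae_of_all _ fun _ => by simp)
  refine ⟨fun y => ?_, hint.integral_prod_right, ?_⟩
  · exact integral_nonneg_of_ae (hκ.mono fun x hx => mul_nonneg (hp.nonneg x) (hx.nonneg y))
  · rw [← _root_.integral_mul_integral_comm hint]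
    calc ∫ x, p x * ∫ y, κ x y ∂ν ∂μ = ∫ x, p x ∂μ :=
          integral_congr_ae (hκ.mono fun x hx => by simp only [hx.integral_eq_one, mul_one])
      _ = 1 := hp.integral_eq_one

end IsProbDensity

/-! ### The Cauchy–Schlömilch substitution -/

/-- The Cauchy–Schlömilch substitution `u ↦ a √u - b / √u`, which maps the half-line onto the
line. -/
noncomputable def schlomilch (a b u : ℝ) : ℝ := a * √u - b / √u

theorem hasDerivAt_schlomilch (a b : ℝ) {u : ℝ} (hu : 0 < u) :
    HasDerivAt (schlomilch a b) (a / (2 * √u) + b / (2 * (u * √u))) u := by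
  have hsqrt := Real.hasDerivAt_sqrt hu.ne'
  refine ((hsqrt.const_mul a).sub
    ((hasDerivAt_const u b).div hsqrt (Real.sqrt_pos.mpr hu).ne')).congr_deriv ?_
  rw [Real.sq_sqrt hu.le]
  field_simp
  ring

theorem strictMonoOn_schlomilch {a b : ℝ} (ha : 0 < a) (hb : 0 < b) :
    StrictMonoOn (schlomilch a b) (Ioi 0) := by
  intro x hx y _ hxy
  have hsqrt : √x < √y := Real.sqrt_lt_sqrt (le_of_lt hx) hxy
  have : 0 < √x := Real.sqrt_pos.mpr hx
  unfold schlomilch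
  gcongr

theorem schlomilch_image_Ioi {a b : ℝ} (ha : 0 < a) (hb : 0 < b) :
    schlomilch a b '' Ioi 0 = univ := by
  refine eq_univ_of_forall fun p => ?_
  -- `√u` is the positive root of `a X ^ 2 - p X - b`
  set D := √(p ^ 2 + 4 * (a * b))
  have hD_sq : D ^ 2 = p ^ 2 + 4 * (a * b) := Real.sq_sqrt (by positivity)
  have hpD : |p| < D := Real.lt_sqrt_of_sq_lt (by rw [sq_abs]; linarith [mul_pos ha hb])
  have hp : 0 < p + D := by linarith [neg_abs_le p]
  refine ⟨((p + D) / (2 * a)) ^ 2, mem_Ioi.2 (by positivity), ?_⟩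
  rw [schlomilch, Real.sqrt_sq (by positivity)]
  field_simp
  linear_combination hD_sq

theorem integral_deriv_schlomilch_mul_gaussian {a b : ℝ} (ha : 0 < a) (hb : 0 < b) :
    ∫ u in Ioi (0 : ℝ), (a / (2 * √u) + b / (2 * (u * √u))) * Real.exp (-schlomilch a b u ^ 2)
      = √π := by
  have hsubst := integral_image_eq_integral_abs_deriv_smul measurableSet_Ioi
    (fun u hu => (hasDerivAt_schlomilch a b hu).hasDerivWithinAt)
    (strictMonoOn_schlomilch ha hb).injOn fun p => Real.exp (-p ^ 2)
  rw [schlomilch_image_Ioi ha hb, setIntegral_univ] at hsubst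
  calc _ = ∫ p : ℝ, Real.exp (-p ^ 2) := by
        refine (hsubst.trans (setIntegral_congr_fun measurableSet_Ioi fun u hu => ?_)).symm
        have : 0 < u := hu
        simp only [smul_eq_mul]
        rw [abs_of_pos (by positivity)]
    _ = √π := by simpa using integral_gaussian 1

theorem integral_Ioi_comp_const_div {k : ℝ} (hk : 0 < k) (g : ℝ → ℝ) :
    ∫ u in Ioi (0 : ℝ), k / u ^ 2 * g (k / u) = ∫ u in Ioi (0 : ℝ), g u := by
  calc ∫ u in Ioi (0 : ℝ), k / u ^ 2 * g (k / u)
      = ∫ u in Ioi (0 : ℝ), (|(-1 : ℝ)| * u ^ ((-1 : ℝ) - 1)) • (k * g (k * u ^ (-1 : ℝ))) := by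
        refine setIntegral_congr_fun measurableSet_Ioi fun u hu => ?_
        have hrpow : u ^ ((-1 : ℝ) - 1) = (u ^ 2)⁻¹ := by
          rw [show (-1 : ℝ) - 1 = -(2 : ℕ) by norm_num, Real.rpow_neg (le_of_lt hu),
            Real.rpow_natCast]
        simp only [hrpow, Real.rpow_neg_one, abs_neg, abs_one, one_mul, smul_eq_mul, div_eq_mul_inv]
        ring
    _ = ∫ u in Ioi (0 : ℝ), k * g (k * u) :=
        integral_comp_rpow_Ioi (fun v => k * g (k * v)) (by norm_num)
    _ = ∫ u in Ioi (0 : ℝ), g u := by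
        rw [integral_const_mul, integral_comp_mul_left_Ioi g 0 hk, mul_zero, smul_eq_mul,
          mul_inv_cancel_left₀ hk.ne']

-- the reflection `u ↦ (b / a) ^ 2 / u` changes the sign of `schlomilch a b`
theorem integral_schlomilch_gaussian_reflection {a b : ℝ} (ha : 0 < a) (hb : 0 < b) :
    ∫ u in Ioi (0 : ℝ), a / (2 * √u) * Real.exp (-schlomilch a b u ^ 2)
      = ∫ u in Ioi (0 : ℝ), b / (2 * (u * √u)) * Real.exp (-schlomilch a b u ^ 2) := by
  have hk : 0 < (b / a) ^ 2 := by positivity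
  rw [← integral_Ioi_comp_const_div hk]
  refine setIntegral_congr_fun measurableSet_Ioi fun u hu => ?_
  have hu : 0 < u := hu
  have : 0 < √u := Real.sqrt_pos.mpr hu
  have hsqrt : √((b / a) ^ 2 / u) = b / a / √u := by
    rw [Real.sqrt_div hk.le, Real.sqrt_sq (by positivity)]
  have hreflect : schlomilch a b ((b / a) ^ 2 / u) = -schlomilch a b u := by
    rw [schlomilch, schlomilch, hsqrt]
    field_simp
    ring
  simp only [hreflect, neg_sq, hsqrt, ← mul_assoc]
  congr 1
  field_simp
  rw [Real.sq_sqrt hu.le]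

theorem integral_div_mul_sqrt_mul_schlomilch_gaussian {a b : ℝ} (ha : 0 < a) (hb : 0 < b) :
    ∫ u in Ioi (0 : ℝ), b / (2 * (u * √u)) * Real.exp (-schlomilch a b u ^ 2) = √π / 2 := by
  have hsum := integral_deriv_schlomilch_mul_gaussian ha hb
  have hint := Integrable.of_integral_ne_zero (hsum.trans_ne (by positivity))
  have integrable_summand : ∀ p : ℝ → ℝ, Measurable p →
      (∀ u > 0, 0 ≤ p u ∧ p u ≤ a / (2 * √u) + b / (2 * (u * √u))) →
      IntegrableOn (fun u => p u * Real.exp (-schlomilch a b u ^ 2)) (Ioi 0) := by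
    intro p mp hp
    refine hint.mono' (by unfold schlomilch; fun_prop) ?_
    filter_upwards [ae_restrict_mem measurableSet_Ioi] with u hu
    rw [Real.norm_of_nonneg (mul_nonneg (hp u hu).1 (Real.exp_pos _).le)]
    exact mul_le_mul_of_nonneg_right (hp u hu).2 (Real.exp_pos _).le
  have hA := integrable_summand (fun u => a / (2 * √u)) (by fun_prop) fun u hu =>
    ⟨by positivity, le_add_of_nonneg_right (by positivity)⟩
  have hB := integrable_summand (fun u => b / (2 * (u * √u))) (by fun_prop) fun u hu =>
    ⟨by positivity, le_add_of_nonneg_left (by positivity)⟩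
  simp only [add_mul] at hsum
  rw [integral_add hA hB, integral_schlomilch_gaussian_reflection ha hb] at hsum
  linarith

/-! ### The one-sided stable law of index `1/2` -/

/-- The density of the one-sided stable law of index `1/2` (Lévy distribution), normalised to have
Laplace transform `s ↦ exp (-t √s)`; it subordinates Poisson semigroups to heat semigroups. -/
noncomputable def levyDensity (t u : ℝ) : ℝ :=
  t * Real.exp (-(t ^ 2 / (4 * u))) / (2 * √π * (u * √u))

@[fun_prop]
theorem measurable_levyDensity {Ω : Type*} [MeasurableSpace Ω] {t u : Ω → ℝ} (ht : Measurable t)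
    (hu : Measurable u) : Measurable fun ω => levyDensity (t ω) (u ω) := by
  unfold levyDensity; fun_prop

theorem levyDensity_nonneg {t : ℝ} (ht : 0 < t) (u : ℝ) : 0 ≤ levyDensity t u := by
  have : 0 ≤ u * √u := by
    rcases le_total 0 u with hu | hu
    · positivity
    · rw [Real.sqrt_eq_zero_of_nonpos hu, mul_zero]
  unfold levyDensity
  positivity

theorem integral_rpow_neg_mul_exp_neg_div {a b : ℝ} (ha : 0 < a) (hb : 0 < b) :
    ∫ u in Ioi (0 : ℝ), u ^ (-(a + 1)) * Real.exp (-(b / u)) = (1 / b) ^ a * Real.Gamma a := by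
  rw [← Real.integral_rpow_mul_exp_neg_mul_Ioi ha hb, ← integral_Ioi_comp_const_div one_pos]
  refine setIntegral_congr_fun measurableSet_Ioi fun u hu => ?_
  have hu : 0 < u := hu
  have hpow : 1 / u ^ 2 * (1 / u) ^ (-(a + 1)) = u ^ (a - 1) := by
    rw [one_div u, Real.inv_rpow hu.le, Real.rpow_neg hu.le, inv_inv, Real.rpow_add_one hu.ne',
      Real.rpow_sub_one hu.ne']
    field_simp
  rw [← hpow, mul_assoc, div_div_eq_mul_div, div_one]

theorem levyDensity_eq_rpow_mul_exp (t : ℝ) {u : ℝ} (hu : 0 < u) :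
    levyDensity t u = t / (2 * √π) * (u ^ (-((1 : ℝ) / 2 + 1)) * Real.exp (-(t ^ 2 / 4 / u))) := by
  rw [levyDensity, Real.rpow_neg hu.le, Real.rpow_add_one hu.ne', ← Real.sqrt_eq_rpow, div_div]
  field_simp

theorem one_div_sq_div_four_rpow_half {t : ℝ} (ht : 0 < t) :
    (1 / (t ^ 2 / 4)) ^ ((1 : ℝ) / 2) = 2 / t := by
  rw [← Real.sqrt_eq_rpow, show 1 / (t ^ 2 / 4) = (2 / t) ^ 2 by field_simp; norm_num,
    Real.sqrt_sq (by positivity)]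

theorem integral_levyDensity {t : ℝ} (ht : 0 < t) :
    ∫ u in Ioi (0 : ℝ), levyDensity t u = 1 := by
  rw [setIntegral_congr_fun measurableSet_Ioi fun u hu => levyDensity_eq_rpow_mul_exp t hu,
    integral_const_mul, integral_rpow_neg_mul_exp_neg_div (by norm_num) (by positivity),
    Real.Gamma_one_half_eq, one_div_sq_div_four_rpow_half ht]
  field_simp

theorem isProbDensity_levyDensity {t : ℝ} (ht : 0 < t) :
    IsProbDensity (levyDensity t) (volume.restrict (Ioi 0)) where
  nonneg := levyDensity_nonneg ht
  integrable := Integrable.of_integral_ne_zero ((integral_levyDensity ht).trans_ne one_ne_zero)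
  integral_eq_one := integral_levyDensity ht

theorem integral_levyDensity_div {t : ℝ} (ht : 0 < t) :
    ∫ u in Ioi (0 : ℝ), levyDensity t u / u = 2 / t ^ 2 := by
  have hrpow : ∀ u ∈ Ioi (0 : ℝ), levyDensity t u / u
      = t / (2 * √π) * (u ^ (-((3 : ℝ) / 2 + 1)) * Real.exp (-(t ^ 2 / 4 / u))) := by
    intro u hu
    rw [levyDensity_eq_rpow_mul_exp t hu, show -((3 : ℝ) / 2 + 1) = -((1 : ℝ) / 2 + 1) - 1 by
      norm_num, Real.rpow_sub_one (ne_of_gt hu)]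
    ring
  rw [setIntegral_congr_fun measurableSet_Ioi hrpow, integral_const_mul,
    integral_rpow_neg_mul_exp_neg_div (by norm_num) (by positivity),
    show (3 : ℝ) / 2 = 1 / 2 + 1 by norm_num, Real.Gamma_add_one (by norm_num),
    Real.Gamma_one_half_eq, Real.rpow_add_one (by positivity), one_div_sq_div_four_rpow_half ht]
  field_simp
  norm_num

theorem levyDensity_mul_exp_neg_mul {t s u : ℝ} (hs : 0 < s) (hu : 0 < u) :
    levyDensity t u * Real.exp (-(s * u)) = 2 * Real.exp (-(t * √s)) / √π *
      (t / 2 / (2 * (u * √u)) * Real.exp (-schlomilch √s (t / 2) u ^ 2)) := by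
  have : 0 < √u := Real.sqrt_pos.mpr hu
  have hexponent : -(t ^ 2 / (4 * u)) + -(s * u)
      = -(t * √s) + -schlomilch √s (t / 2) u ^ 2 := by
    rw [schlomilch, sub_sq, mul_pow, div_pow _ √u, Real.sq_sqrt hs.le, Real.sq_sqrt hu.le]
    field_simp
    ring
  calc levyDensity t u * Real.exp (-(s * u))
      = t / (2 * √π * (u * √u)) *
          (Real.exp (-(t ^ 2 / (4 * u))) * Real.exp (-(s * u))) := by rw [levyDensity]; ring
    _ = t / (2 * √π * (u * √u)) *
          (Real.exp (-(t * √s)) * Real.exp (-schlomilch √s (t / 2) u ^ 2)) := by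
        rw [← Real.exp_add, hexponent, Real.exp_add]
    _ = _ := by field_simp

theorem laplace_levyDensity {t s : ℝ} (ht : 0 < t) (hs : 0 ≤ s) :
    ∫ u in Ioi (0 : ℝ), levyDensity t u * Real.exp (-(s * u)) = Real.exp (-(t * √s)) := by
  rcases hs.eq_or_lt with rfl | hs
  · simpa using integral_levyDensity ht
  rw [setIntegral_congr_fun measurableSet_Ioi fun u hu => levyDensity_mul_exp_neg_mul hs hu,
    integral_const_mul, integral_div_mul_sqrt_mul_schlomilch_gaussian (Real.sqrt_pos.mpr hs)
      (half_pos ht)]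
  field_simp

/-- The one-sided stable law of index `1/2`, as a measure on the line. -/
noncomputable def levyMeasure (t : ℝ) : Measure ℝ :=
  (volume.restrict (Ioi 0)).withDensity fun u => ENNReal.ofReal (levyDensity t u)

theorem ae_levyMeasure_pos (t : ℝ) : ∀ᵐ u ∂levyMeasure t, 0 < u :=
  (withDensity_absolutelyContinuous _ _).ae_le (ae_restrict_mem measurableSet_Ioi)

theorem integral_levyMeasure {t : ℝ} (ht : 0 < t) (G : ℝ → ℝ) :
    ∫ u, G u ∂levyMeasure t = ∫ u in Ioi (0 : ℝ), levyDensity t u * G u := by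
  rw [levyMeasure, integral_withDensity_eq_integral_toReal_smul
    (Measurable.ennreal_ofReal (by fun_prop)) (by simp)]
  simp only [ENNReal.toReal_ofReal (levyDensity_nonneg ht _), smul_eq_mul]

theorem isProbabilityMeasure_levyMeasure {t : ℝ} (ht : 0 < t) :
    IsProbabilityMeasure (levyMeasure t) := by
  refine ⟨?_⟩
  rw [levyMeasure, withDensity_apply _ MeasurableSet.univ, Measure.restrict_univ,
    ← ofReal_integral_eq_lintegral_ofReal (isProbDensity_levyDensity ht).integrable
      (ae_of_all _ (levyDensity_nonneg ht)), integral_levyDensity ht, ENNReal.ofReal_one]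

theorem ae_levyMeasure_prod_pos (t s : ℝ) :
    ∀ᵐ p ∂(levyMeasure t).prod (levyMeasure s), 0 < p.1 ∧ 0 < p.2 :=
  (Measure.quasiMeasurePreserving_fst.ae (ae_levyMeasure_pos t)).and
    (Measure.quasiMeasurePreserving_snd.ae (ae_levyMeasure_pos s))

theorem levyMeasure_conv {t s : ℝ} (ht : 0 < t) (hs : 0 < s) :
    (levyMeasure t).conv (levyMeasure s) = levyMeasure (t + s) := by
  have := isProbabilityMeasure_levyMeasure ht
  have := isProbabilityMeasure_levyMeasure hs
  have := isProbabilityMeasure_levyMeasure (add_pos ht hs)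
  have hadd : AEMeasurable (fun p : ℝ × ℝ => p.1 + p.2)
      ((levyMeasure t).prod (levyMeasure s)) := by fun_prop
  refine measure_eq_of_laplace_real ?_ ((ae_levyMeasure_pos _).mono fun u hu => hu.le)
    fun l hl => ?_
  · rw [Measure.conv, ae_map_iff hadd measurableSet_Ici]
    exact (ae_levyMeasure_prod_pos t s).mono fun p hp => (add_pos hp.1 hp.2).le
  · rw [Measure.conv, integral_map hadd (Continuous.aestronglyMeasurable (by fun_prop))]
    simp only [mul_add, neg_add, Real.exp_add]
    rw [integral_prod_mul (fun u => Real.exp (-(l * u))) (fun u => Real.exp (-(l * u))),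
      integral_levyMeasure ht, integral_levyMeasure hs, integral_levyMeasure (add_pos ht hs),
      laplace_levyDensity ht hl, laplace_levyDensity hs hl, laplace_levyDensity (add_pos ht hs) hl,
      ← Real.exp_add, add_mul, neg_add]

section Average

variable {t M : ℝ} {G : ℝ → ℝ}

theorem integral_levyDensity_convolution {s : ℝ} (ht : 0 < t) (hs : 0 < s) (hG : Measurable G)
    (hM : ∀ u > 0, |G u| ≤ M) :
    ∫ u in Ioi (0 : ℝ), levyDensity t u * ∫ v in Ioi (0 : ℝ), levyDensity s v * G (u + v)
      = ∫ w in Ioi (0 : ℝ), levyDensity (t + s) w * G w := by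
  have := isProbabilityMeasure_levyMeasure ht
  have := isProbabilityMeasure_levyMeasure hs
  have hint : Integrable (fun p : ℝ × ℝ => G (p.1 + p.2))
      ((levyMeasure t).prod (levyMeasure s)) :=
    Integrable.of_bound (Measurable.aestronglyMeasurable (by fun_prop)) M
      ((ae_levyMeasure_prod_pos t s).mono fun p hp => hM _ (add_pos hp.1 hp.2))
  rw [← integral_levyMeasure (add_pos ht hs), ← levyMeasure_conv ht hs, Measure.conv,
    integral_map (by fun_prop) hG.aestronglyMeasurable, integral_prod _ hint,
    integral_levyMeasure ht]
  simp only [integral_levyMeasure hs]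

/-- The derivative of the Lévy density `levyDensity t u` in the parameter `t`. -/
noncomputable def levyDensityDeriv (t u : ℝ) : ℝ := (1 / t - t / (2 * u)) * levyDensity t u

theorem hasDerivAt_levyDensity (ht : 0 < t) {u : ℝ} (hu : 0 < u) :
    HasDerivAt (fun τ => levyDensity τ u) (levyDensityDeriv t u) t := by
  have hexponent : HasDerivAt (fun τ : ℝ => -(τ ^ 2 / (4 * u))) (-(2 * t / (4 * u))) t :=
    ((hasDerivAt_pow 2 t).div_const (4 * u)).fun_neg.congr_deriv (by simp)
  refine (((hasDerivAt_id t).mul hexponent.exp).div_const (2 * √π * (u * √u))).congr_deriv ?_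
  simp only [levyDensityDeriv, levyDensity, id]
  field_simp
  ring

theorem abs_levyDensityDeriv_le (ht : 0 < t) {u : ℝ} (hu : 0 < u) :
    |levyDensityDeriv t u| ≤ 1 / t * levyDensity t u + t / 2 * (levyDensity t u / u) := by
  rw [levyDensityDeriv, abs_mul, abs_of_nonneg (levyDensity_nonneg ht u)]
  calc |1 / t - t / (2 * u)| * levyDensity t u
      ≤ (|1 / t| + |t / (2 * u)|) * levyDensity t u :=
        mul_le_mul_of_nonneg_right (abs_sub _ _) (levyDensity_nonneg ht u)
    _ = _ := by
        rw [abs_of_pos (by positivity), abs_of_pos (by positivity)]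
        field_simp

theorem integrableOn_levyDensity_div (ht : 0 < t) :
    IntegrableOn (fun u => levyDensity t u / u) (Ioi 0) :=
  Integrable.of_integral_ne_zero ((integral_levyDensity_div ht).trans_ne (by positivity))

theorem integrableOn_levyDensity_add_div (ht : 0 < t) (a b : ℝ) :
    IntegrableOn (fun u => a * levyDensity t u + b * (levyDensity t u / u)) (Ioi 0) :=
  ((isProbDensity_levyDensity ht).integrable.const_mul a).add
    ((integrableOn_levyDensity_div ht).const_mul b)

theorem integral_levyDensity_add_div (ht : 0 < t) :
    ∫ u in Ioi (0 : ℝ), (1 / t * levyDensity t u + t / 2 * (levyDensity t u / u)) = 2 / t := by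
  rw [integral_add, integral_const_mul, integral_const_mul, integral_levyDensity ht,
    integral_levyDensity_div ht]
  · field_simp
    norm_num
  · exact (isProbDensity_levyDensity ht).integrable.const_mul _
  · exact (integrableOn_levyDensity_div ht).const_mul _

theorem abs_levyDensityDeriv_le_of_mem_ball {τ : ℝ} (hτ : τ ∈ Metric.ball t (t / 2)) {u : ℝ}
    (hu : 0 < u) : |levyDensityDeriv τ u|
      ≤ 6 / t * levyDensity (t / 2) u + 3 * t * (levyDensity (t / 2) u / u) := by
  rw [Metric.mem_ball, Real.dist_eq, abs_lt] at hτ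
  have hlower : t / 2 < τ := by linarith
  have ht : 0 < t := by linarith
  have hτ_pos : 0 < τ := by linarith
  have hdensity : levyDensity τ u ≤ 3 * levyDensity (t / 2) u := by
    unfold levyDensity
    rw [← mul_div_assoc, ← mul_assoc 3 (t / 2)]
    gcongr
    linarith
  have : 0 ≤ levyDensity τ u := levyDensity_nonneg hτ_pos u
  have hinv : 1 / τ ≤ 2 / t := by
    rw [div_le_div_iff₀ hτ_pos ht]
    linarith
  have hhalf : τ / 2 ≤ t := by linarith
  calc |levyDensityDeriv τ u|
      ≤ 1 / τ * levyDensity τ u + τ / 2 * (levyDensity τ u / u) :=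
        abs_levyDensityDeriv_le hτ_pos hu
    _ ≤ 2 / t * (3 * levyDensity (t / 2) u) + t * (3 * levyDensity (t / 2) u / u) := by gcongr
    _ = _ := by ring

theorem hasDerivAt_integral_levyDensity (ht : 0 < t) (hG : Measurable G)
    (hM : ∀ u > 0, |G u| ≤ M) :
    ∃ D, HasDerivAt (fun t => ∫ u in Ioi (0 : ℝ), levyDensity t u * G u) D t ∧
      |D| ≤ 2 * M / t := by
  have abs_mul_le : ∀ {a b u : ℝ}, |a| ≤ b → 0 < u → ‖a * G u‖ ≤ b * M := fun hab hu => by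
    rw [Real.norm_eq_abs, abs_mul]
    exact mul_le_mul hab (hM _ hu) (abs_nonneg _) ((abs_nonneg _).trans hab)
  have hderiv := hasDerivAt_integral_of_dominated_loc_of_deriv_le
    (μ := volume.restrict (Ioi (0 : ℝ))) (F := fun τ u => levyDensity τ u * G u)
    (F' := fun τ u => levyDensityDeriv τ u * G u) (x₀ := t)
    (bound := fun u =>
      (6 / t * levyDensity (t / 2) u + 3 * t * (levyDensity (t / 2) u / u)) * M)
    (Metric.ball_mem_nhds t (half_pos ht))
    (Filter.Eventually.of_forall fun τ => Measurable.aestronglyMeasurable (by fun_prop))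
    ((isProbDensity_levyDensity ht).integrable_mul hG.aestronglyMeasurable
      ((ae_restrict_mem measurableSet_Ioi).mono fun u hu => hM u hu))
    (Measurable.aestronglyMeasurable (by unfold levyDensityDeriv; fun_prop))
    ((ae_restrict_mem measurableSet_Ioi).mono fun u hu τ hτ =>
      abs_mul_le (abs_levyDensityDeriv_le_of_mem_ball hτ hu) hu)
    ((integrableOn_levyDensity_add_div (half_pos ht) _ _).mul_const M)
    ((ae_restrict_mem measurableSet_Ioi).mono fun u hu τ hτ => by
      rw [Metric.mem_ball, Real.dist_eq, abs_lt] at hτ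
      exact (hasDerivAt_levyDensity (by linarith) hu).mul_const _)
  refine ⟨_, hderiv.2, ?_⟩
  calc |∫ u in Ioi (0 : ℝ), levyDensityDeriv t u * G u|
      ≤ ∫ u in Ioi (0 : ℝ), (1 / t * levyDensity t u + t / 2 * (levyDensity t u / u)) * M :=
        norm_integral_le_of_norm_le ((integrableOn_levyDensity_add_div ht _ _).mul_const M)
          ((ae_restrict_mem measurableSet_Ioi).mono fun u hu =>
            abs_mul_le (abs_levyDensityDeriv_le ht hu) hu)
    _ = 2 * M / t := by
        rw [integral_mul_const, integral_levyDensity_add_div ht]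
        ring

theorem levyDensity_sq_mul (ht : 0 < t) {v : ℝ} (hv : 0 < v) :
    t ^ 2 * levyDensity t (t ^ 2 * v) = levyDensity 1 v := by
  rw [levyDensity, levyDensity, Real.sqrt_mul (by positivity), Real.sqrt_sq ht.le,
    show t ^ 2 / (4 * (t ^ 2 * v)) = 1 ^ 2 / (4 * v) by field_simp]
  field_simp

theorem integral_levyDensity_mul_eq_scaled (ht : 0 < t) (G : ℝ → ℝ) :
    ∫ u in Ioi (0 : ℝ), levyDensity t u * G u
      = ∫ v in Ioi (0 : ℝ), levyDensity 1 v * G (t ^ 2 * v) := by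
  have hscale := integral_comp_mul_left_Ioi (fun u => levyDensity t u * G u) 0 (pow_pos ht 2)
  rw [mul_zero, eq_comm, inv_smul_eq_iff₀ (by positivity), ← integral_smul] at hscale
  rw [hscale]
  refine setIntegral_congr_fun measurableSet_Ioi fun v hv => ?_
  simp only [smul_eq_mul, ← mul_assoc, levyDensity_sq_mul ht hv]

open Filter Topology in
theorem tendsto_integral_levyDensity {L : ℝ} (hG : Measurable G)
    (hM : ∀ u > 0, |G u| ≤ M) (hL : Tendsto G (𝓝[>] 0) (𝓝 L)) :
    Tendsto (fun t => ∫ u in Ioi (0 : ℝ), levyDensity t u * G u) (𝓝[>] 0) (𝓝 L) := by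
  have tendsto_sq_mul : ∀ v > (0 : ℝ), Tendsto (fun t : ℝ => t ^ 2 * v) (𝓝[>] 0) (𝓝[>] 0) := by
    intro v hv
    refine tendsto_nhdsWithin_iff.mpr ⟨?_, ?_⟩
    · exact (Continuous.tendsto' (by fun_prop) 0 0 (by simp)).mono_left nhdsWithin_le_nhds
    · filter_upwards [self_mem_nhdsWithin] with t ht using mul_pos (pow_pos ht 2) hv
  have hlim : Tendsto (fun t => ∫ v in Ioi (0 : ℝ), levyDensity 1 v * G (t ^ 2 * v))
      (𝓝[>] 0) (𝓝 (∫ v in Ioi (0 : ℝ), levyDensity 1 v * L)) := by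
    refine tendsto_integral_filter_of_dominated_convergence (fun v => levyDensity 1 v * M)
      (Eventually.of_forall fun t => Measurable.aestronglyMeasurable (by fun_prop)) ?_
      ((isProbDensity_levyDensity one_pos).integrable.mul_const M) ?_
    · filter_upwards [self_mem_nhdsWithin] with t ht
      filter_upwards [ae_restrict_mem measurableSet_Ioi] with v hv
      rw [norm_mul, Real.norm_of_nonneg (levyDensity_nonneg one_pos v)]
      exact mul_le_mul_of_nonneg_left (hM _ (mul_pos (pow_pos ht 2) hv))
        (levyDensity_nonneg one_pos v)
    · filter_upwards [ae_restrict_mem measurableSet_Ioi] with v hv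
      exact (hL.comp (tendsto_sq_mul v hv)).const_mul _
  rw [integral_mul_const, integral_levyDensity one_pos, one_mul] at hlim
  refine hlim.congr' ?_
  filter_upwards [self_mem_nhdsWithin] with t ht using
    (integral_levyDensity_mul_eq_scaled ht G).symm

end Average

/-! ### The one-dimensional Laguerre heat kernel -/

open ProbabilityTheory (gammaPDFReal gammaPDFReal_nonneg)

@[fun_prop]
theorem measurable_gammaPDFReal_comp {Ω : Type*} [MeasurableSpace Ω] {f g : Ω → ℝ} (a : ℝ)
    (hf : Measurable f) (hg : Measurable g) :
    Measurable fun ω => gammaPDFReal a (f ω) (g ω) := by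
  unfold gammaPDFReal
  exact Measurable.ite (measurableSet_le measurable_const hg) (by fun_prop) measurable_const

theorem laplace_gammaPDFReal {a b s : ℝ} (ha : 0 < a) (hb : 0 < b) (hs : 0 ≤ s) :
    ∫ y in Ioi (0 : ℝ), gammaPDFReal a b y * Real.exp (-(s * y)) = (b / (b + s)) ^ a := by
  have : Real.Gamma a ≠ 0 := (Real.Gamma_pos_of_pos ha).ne'
  have hpdf : ∀ y ∈ Ioi (0 : ℝ), gammaPDFReal a b y * Real.exp (-(s * y))
      = b ^ a / Real.Gamma a * (y ^ (a - 1) * Real.exp (-((b + s) * y))) := by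
    intro y hy
    rw [gammaPDFReal, if_pos (le_of_lt hy), add_mul, neg_add, Real.exp_add]
    ring
  rw [setIntegral_congr_fun measurableSet_Ioi hpdf, integral_const_mul,
    Real.integral_rpow_mul_exp_neg_mul_Ioi ha (by positivity), div_eq_mul_one_div b,
    Real.mul_rpow hb.le (by positivity)]
  field_simp

theorem integrableOn_gammaPDFReal_mul_exp {a b s : ℝ} (ha : 0 < a) (hb : 0 < b) (hs : 0 ≤ s) :
    IntegrableOn (fun y => gammaPDFReal a b y * Real.exp (-(s * y))) (Ioi 0) :=
  Integrable.of_integral_ne_zero ((laplace_gammaPDFReal ha hb hs).trans_ne (by positivity))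

/-- The one-dimensional Laguerre heat kernel at time `-log r`, with respect to Lebesgue measure in
`y`. It is encoded as the mixture of the Gamma laws of shape `m + a + 1` and rate `(1 - r)⁻¹`, with
`m` Poisson of mean `r x / (1 - r)`; `besselI_eq_laguerreKernel` gives the usual Bessel formula. -/
noncomputable def laguerreKernel (a r x y : ℝ) : ℝ :=
  ∑' m : ℕ, Real.exp (-(r * x / (1 - r))) * (r * x / (1 - r)) ^ m / m.factorial *
    gammaPDFReal (m + a + 1) (1 - r)⁻¹ y

/-- The Laplace transform in `y` of `laguerreKernel a r x y`. -/
noncomputable def laguerreLaplace (a r s x : ℝ) : ℝ :=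
  (1 / (1 + s * (1 - r))) ^ (a + 1) * Real.exp (-(s * r * x / (1 + s * (1 - r))))

@[fun_prop]
theorem measurable_laguerreKernel {Ω : Type*} [MeasurableSpace Ω] {f g h : Ω → ℝ} (a : ℝ)
    (hf : Measurable f) (hg : Measurable g) (hh : Measurable h) :
    Measurable fun ω => laguerreKernel a (f ω) (g ω) (h ω) := by
  unfold laguerreKernel
  exact Measurable.tsum fun m => by fun_prop

theorem rpow_natCast_add {x : ℝ} (hx : x ≠ 0) (m : ℕ) (a : ℝ) : x ^ (m + a) = x ^ m * x ^ a := by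
  rw [add_comm, Real.rpow_add_natCast hx, mul_comm]

theorem besselI_term_rpow {r c x y : ℝ} (a : ℝ) (hr : 0 < r) (hc : 0 < c) (hx : 0 < x)
    (hy : 0 < y) (m : ℕ) :
    (y / x) ^ (a / 2) * r ^ (-(a / 2)) * (√(r * x * y) / c) ^ (2 * (m : ℝ) + a)
      = (r * x / c) ^ m * y ^ (m + a) / c ^ (m + a) := by
  have hsqrt : √(r * x * y) ^ (2 * (m : ℝ) + a)
      = (r * x * y) ^ m * (r ^ (a / 2) * x ^ (a / 2) * y ^ (a / 2)) := by
    rw [Real.sqrt_eq_rpow, ← Real.rpow_mul (by positivity),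
      show 1 / 2 * (2 * (m : ℝ) + a) = m + a / 2 by ring, rpow_natCast_add (by positivity),
      Real.mul_rpow (by positivity) hy.le, Real.mul_rpow hr.le hx.le]
  have hy_half : y ^ a = y ^ (a / 2) * y ^ (a / 2) := by rw [← Real.rpow_add hy, add_halves]
  rw [Real.div_rpow (by positivity) hc.le, hsqrt, Real.div_rpow hy.le hx.le, Real.rpow_neg hr.le,
    show 2 * (m : ℝ) + a = m + (m + a) by ring, rpow_natCast_add hc.ne',
    rpow_natCast_add hy.ne', hy_half, div_pow, mul_pow _ y]
  field_simp

section Laguerre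

variable {a r x : ℝ}

theorem besselI_eq_laguerreKernel {y : ℝ} (hr0 : 0 < r) (hr1 : r < 1) (hx : 0 < x) (hy : 0 < y) :
    (y / x) ^ (a / 2) * Real.exp (-((r * x + y) / (1 - r)) - a * Real.log r / 2) *
      besselI a (2 * √(r * x * y) / (1 - r)) = (1 - r) * laguerreKernel a r x y := by
  have hc : 0 < 1 - r := sub_pos.2 hr1
  have hexp : Real.exp (-((r * x + y) / (1 - r)) - a * Real.log r / 2)
      = r ^ (-(a / 2)) * (Real.exp (-(r * x / (1 - r))) * Real.exp (-((1 - r)⁻¹ * y))) := by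
    rw [Real.rpow_def_of_pos hr0, ← Real.exp_add, ← Real.exp_add]
    congr 1
    ring
  rw [laguerreKernel, besselI, ← tsum_mul_left, ← tsum_mul_left]
  refine tsum_congr fun m => ?_
  have hc_rpow : (1 - r) * (1 - r)⁻¹ ^ (m + a + 1) = 1 / (1 - r) ^ (m + a) := by
    rw [Real.inv_rpow hc.le, Real.rpow_add_one hc.ne']
    field_simp
  rw [hexp, show 2 * √(r * x * y) / (1 - r) / 2 = √(r * x * y) / (1 - r) by ring, gammaPDFReal,
    if_pos hy.le, add_sub_cancel_right]
  linear_combination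
    Real.exp (-(r * x / (1 - r))) * Real.exp (-((1 - r)⁻¹ * y)) / (m.factorial *
      Real.Gamma (m + a + 1)) * besselI_term_rpow a hr0 hc hx hy m
    - Real.exp (-(r * x / (1 - r))) * (r * x / (1 - r)) ^ m / m.factorial *
      (y ^ (m + a) * Real.exp (-((1 - r)⁻¹ * y)) / Real.Gamma (m + a + 1)) * hc_rpow

theorem laguerreKernel_symm {y : ℝ} (hr1 : r < 1) (hx : 0 < x) (hy : 0 < y) :
    x ^ a * Real.exp (-x) * laguerreKernel a r x y
      = y ^ a * Real.exp (-y) * laguerreKernel a r y x := by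
  have : 1 - r ≠ 0 := (sub_pos.2 hr1).ne'
  have hexp : ∀ z : ℝ, Real.exp (-z) * Real.exp (-(r * z / (1 - r)))
      = Real.exp (-((1 - r)⁻¹ * z)) := by
    intro z
    rw [← Real.exp_add]
    congr 1
    field_simp
    ring
  rw [laguerreKernel, laguerreKernel, ← tsum_mul_left, ← tsum_mul_left]
  refine tsum_congr fun m => ?_
  simp only [gammaPDFReal, if_pos hx.le, if_pos hy.le, ← hexp, add_sub_cancel_right,
    rpow_natCast_add hx.ne', rpow_natCast_add hy.ne', div_pow, mul_pow]
  ring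

theorem poisson_weight_mul_laplace_gammaPDFReal {s : ℝ} (ha : -1 < a) (hr1 : r < 1) (hs : 0 ≤ s)
    (m : ℕ) (l : ℝ) :
    ∫ y in Ioi (0 : ℝ), Real.exp (-l) * l ^ m / m.factorial *
        gammaPDFReal (m + a + 1) (1 - r)⁻¹ y * Real.exp (-(s * y))
      = (1 / (1 + s * (1 - r))) ^ (a + 1) * Real.exp (-l) *
        ((l / (1 + s * (1 - r))) ^ m / m.factorial) := by
  have hc : 0 < 1 - r := sub_pos.2 hr1
  have hrate : (1 - r)⁻¹ / ((1 - r)⁻¹ + s) = 1 / (1 + s * (1 - r)) := by field_simp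
  simp only [mul_assoc _ (gammaPDFReal _ _ _), integral_const_mul]
  rw [laplace_gammaPDFReal (by linarith [m.cast_nonneg (α := ℝ)]) (inv_pos.2 hc) hs, hrate,
    add_assoc, rpow_natCast_add (by positivity), div_pow, div_pow]
  ring

theorem hasSum_poisson_weight_mul_laplace_gammaPDFReal {s : ℝ} (hr1 : r < 1) (hs : 0 ≤ s) :
    HasSum (fun m : ℕ => (1 / (1 + s * (1 - r))) ^ (a + 1) * Real.exp (-(r * x / (1 - r))) *
      ((r * x / (1 - r) / (1 + s * (1 - r))) ^ m / m.factorial)) (laguerreLaplace a r s x) := by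
  have : 0 < 1 - r := sub_pos.2 hr1
  have : 1 + s * (1 - r) ≠ 0 := by positivity
  have hexp : laguerreLaplace a r s x
      = (1 / (1 + s * (1 - r))) ^ (a + 1) * Real.exp (-(r * x / (1 - r))) *
        Real.exp (r * x / (1 - r) / (1 + s * (1 - r))) := by
    rw [laguerreLaplace, mul_assoc (_ ^ _), ← Real.exp_add]
    congr 2
    field_simp
    ring
  have hseries := (NormedSpace.expSeries_div_hasSum_exp
    (r * x / (1 - r) / (1 + s * (1 - r)))).mul_left
      ((1 / (1 + s * (1 - r))) ^ (a + 1) * Real.exp (-(r * x / (1 - r))))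
  rwa [← Real.exp_eq_exp_ℝ, ← hexp] at hseries

theorem laplace_laguerreKernel {s : ℝ} (ha : -1 < a) (hr0 : 0 < r) (hr1 : r < 1) (hx : 0 ≤ x)
    (hs : 0 ≤ s) :
    ∫ y in Ioi (0 : ℝ), laguerreKernel a r x y * Real.exp (-(s * y))
      = laguerreLaplace a r s x := by
  have hrate : 0 < (1 - r)⁻¹ := inv_pos.2 (sub_pos.2 hr1)
  have hshape : ∀ m : ℕ, 0 < m + a + 1 := fun m => by linarith [m.cast_nonneg (α := ℝ)]
  set F : ℕ → ℝ → ℝ := fun m y => Real.exp (-(r * x / (1 - r))) * (r * x / (1 - r)) ^ m /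
    m.factorial * gammaPDFReal (m + a + 1) (1 - r)⁻¹ y * Real.exp (-(s * y)) with hF
  have hF_nonneg : ∀ m y, 0 ≤ F m y := fun m y => by
    have := gammaPDFReal_nonneg (hshape m) hrate y
    have := sub_pos.2 hr1
    positivity
  have hF_integral := fun m : ℕ =>
    poisson_weight_mul_laplace_gammaPDFReal ha hr1 hs m (r * x / (1 - r))
  have hF_sum := hasSum_poisson_weight_mul_laplace_gammaPDFReal (a := a) (x := x) hr1 hs
  have hF_norm : ∀ m, ∫ y in Ioi (0 : ℝ), ‖F m y‖ = ∫ y in Ioi (0 : ℝ), F m y := fun m => by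
    simp only [Real.norm_of_nonneg (hF_nonneg m _)]
  refine HasSum.unique (?_ : HasSum (fun m => ∫ y in Ioi (0 : ℝ), F m y) _)
    (by simpa only [hF, hF_integral] using hF_sum)
  simp only [laguerreKernel, ← tsum_mul_right]
  refine hasSum_integral_of_summable_integral_norm (fun m => ?_) ?_
  · simp only [hF, mul_assoc _ (gammaPDFReal _ _ _)]
    exact (integrableOn_gammaPDFReal_mul_exp (hshape m) hrate hs).const_mul _
  · simp only [hF_norm]
    simp only [hF, hF_integral]
    exact hF_sum.summable

theorem isProbDensity_laguerreKernel (ha : -1 < a) (hr0 : 0 < r) (hr1 : r < 1) (hx : 0 ≤ x) :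
    IsProbDensity (laguerreKernel a r x) (volume.restrict (Ioi 0)) := by
  have hone : ∫ y in Ioi (0 : ℝ), laguerreKernel a r x y = 1 := by
    simpa [laguerreLaplace] using laplace_laguerreKernel ha hr0 hr1 hx le_rfl
  refine ⟨fun y => ?_, Integrable.of_integral_ne_zero (hone.trans_ne one_ne_zero), hone⟩
  have : 0 < 1 - r := sub_pos.2 hr1
  refine tsum_nonneg fun m => mul_nonneg (by positivity)
    (gammaPDFReal_nonneg (by linarith [m.cast_nonneg (α := ℝ)]) (inv_pos.2 this) y)

theorem laguerreLaplace_comp {q s : ℝ} (hr0 : 0 < r) (hr1 : r < 1) (hq0 : 0 < q) (hq1 : q < 1)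
    (hs : 0 ≤ s) : (1 / (1 + s * (1 - q))) ^ (a + 1) *
      laguerreLaplace a r (s * q / (1 + s * (1 - q))) x = laguerreLaplace a (r * q) s x := by
  have : 0 < 1 - q := sub_pos.2 hq1
  have : 0 < 1 + s * (1 - q) := by positivity
  have : 0 < 1 - r * q := sub_pos.2 (mul_lt_one_of_nonneg_of_lt_one_left hr0.le hr1 hq1.le)
  have hdenom : 1 + s * q / (1 + s * (1 - q)) * (1 - r)
      = (1 + s * (1 - r * q)) / (1 + s * (1 - q)) := by
    field_simp
    ring
  rw [laguerreLaplace, laguerreLaplace, hdenom, ← mul_assoc,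
    ← Real.mul_rpow (by positivity) (by positivity)]
  congr 2 <;> field_simp

end Laguerre

/-! ### The Laguerre heat semigroup -/

theorem measurableSet_posOrthant (d : ℕ) : MeasurableSet (posOrthant d) :=
  MeasurableSet.pi countable_univ fun _ _ => measurableSet_Ioi

theorem volume_restrict_posOrthant (d : ℕ) :
    (volume : Measure (Fin d → ℝ)).restrict (posOrthant d)
      = Measure.pi fun _ => volume.restrict (Ioi 0) := by
  rw [volume_pi, posOrthant, Measure.restrict_pi_pi]

theorem pos_of_mem_posOrthant {d : ℕ} {x : Fin d → ℝ} (hx : x ∈ posOrthant d) (j : Fin d) :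
    0 < x j := hx j (mem_univ j)

theorem ae_restrict_posOrthant {d : ℕ} {p : (Fin d → ℝ) → Prop} (h : ∀ y ∈ posOrthant d, p y) :
    ∀ᵐ y ∂volume.restrict (posOrthant d), p y :=
  (ae_restrict_mem (measurableSet_posOrthant d)).mono h

section Heat

variable {d : ℕ} {α : Fin d → ℝ}

/-- The Laguerre heat kernel on the orthant, at time `u` and with respect to Lebesgue measure. -/
noncomputable def heatKernel (α : Fin d → ℝ) (u : ℝ) (x y : Fin d → ℝ) : ℝ :=
  ∏ j, laguerreKernel (α j) (Real.exp (-u)) (x j) (y j)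

/-- The Laguerre heat semigroup, to which the Poisson–Laguerre semigroup is subordinated. -/
noncomputable def heatSemigroup (α : Fin d → ℝ) (u : ℝ) (f : (Fin d → ℝ) → ℝ) (x : Fin d → ℝ) :
    ℝ :=
  ∫ y in posOrthant d, heatKernel α u x y * f y

@[fun_prop]
theorem measurable_heatKernel {Ω : Type*} [MeasurableSpace Ω] {u : Ω → ℝ} {x y : Ω → Fin d → ℝ}
    (hu : Measurable u) (hx : Measurable x) (hy : Measurable y) :
    Measurable fun ω => heatKernel α (u ω) (x ω) (y ω) := by
  unfold heatKernel
  fun_prop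

theorem measurable_uncurry_heatKernel (α : Fin d → ℝ) (u : ℝ) :
    Measurable (Function.uncurry (heatKernel α u)) :=
  measurable_heatKernel measurable_const measurable_fst measurable_snd

@[fun_prop]
theorem measurable_heatSemigroup {Ω : Type*} [MeasurableSpace Ω] {u : Ω → ℝ} {x : Ω → Fin d → ℝ}
    {f : (Fin d → ℝ) → ℝ} (hu : Measurable u) (hx : Measurable x) (hf : Measurable f) :
    Measurable fun ω => heatSemigroup α (u ω) f (x ω) := by
  unfold heatSemigroup
  exact (StronglyMeasurable.integral_prod_right (f := fun ω y => heatKernel α (u ω) (x ω) y * f y)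
    (Measurable.stronglyMeasurable (by fun_prop))).measurable

variable {u v M : ℝ} {f : (Fin d → ℝ) → ℝ} {x : Fin d → ℝ}

theorem isProbDensity_heatKernel (hα : ∀ j, -1 < α j) (hu : 0 < u) (hx : x ∈ posOrthant d) :
    IsProbDensity (heatKernel α u x) (volume.restrict (posOrthant d)) := by
  rw [volume_restrict_posOrthant]
  exact IsProbDensity.fintype_prod fun j => isProbDensity_laguerreKernel (hα j) (Real.exp_pos _)
    (Real.exp_lt_one_iff.2 (neg_lt_zero.2 hu)) (pos_of_mem_posOrthant hx j).le

theorem laplace_heatKernel (hα : ∀ j, -1 < α j) (hu : 0 < u) (hx : x ∈ posOrthant d)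
    {s : Fin d → ℝ} (hs : ∀ j, 0 ≤ s j) :
    ∫ y in posOrthant d, heatKernel α u x y * Real.exp (-∑ j, s j * y j)
      = ∏ j, laguerreLaplace (α j) (Real.exp (-u)) (s j) (x j) := by
  simp only [heatKernel, ← Finset.sum_neg_distrib, Real.exp_sum, ← Finset.prod_mul_distrib,
    volume_restrict_posOrthant]
  rw [integral_fintype_prod_eq_prod
    (fun j z => laguerreKernel (α j) (Real.exp (-u)) (x j) z * Real.exp (-(s j * z)))]
  exact Finset.prod_congr rfl fun j _ => laplace_laguerreKernel (hα j) (Real.exp_pos _)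
    (Real.exp_lt_one_iff.2 (neg_lt_zero.2 hu)) (pos_of_mem_posOrthant hx j).le (hs j)

theorem integral_heatKernel_mul_prod_laguerreLaplace (hα : ∀ j, -1 < α j) (hu : 0 < u) (hv : 0 < v)
    (hx : x ∈ posOrthant d) {s : Fin d → ℝ} (hs : ∀ j, 0 ≤ s j) :
    ∫ y in posOrthant d, heatKernel α u x y *
        ∏ j, laguerreLaplace (α j) (Real.exp (-v)) (s j) (y j)
      = ∏ j, laguerreLaplace (α j) (Real.exp (-(u + v))) (s j) (x j) := by
  have hv_lt : Real.exp (-v) < 1 := Real.exp_lt_one_iff.2 (neg_lt_zero.2 hv)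
  have : 0 < 1 - Real.exp (-v) := sub_pos.2 hv_lt
  set σ : Fin d → ℝ := fun j => s j * Real.exp (-v) / (1 + s j * (1 - Real.exp (-v))) with hσ
  set c : ℝ := ∏ j, (1 / (1 + s j * (1 - Real.exp (-v)))) ^ (α j + 1) with hc
  have hprod : ∀ y : Fin d → ℝ, ∏ j, laguerreLaplace (α j) (Real.exp (-v)) (s j) (y j)
      = c * Real.exp (-∑ j, σ j * y j) := fun y => by
    simp only [laguerreLaplace, Finset.prod_mul_distrib, ← Finset.sum_neg_distrib, Real.exp_sum,
      hc, hσ, div_mul_eq_mul_div]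
  have hσ_nonneg : ∀ j, 0 ≤ σ j := fun j => by
    have := hs j
    positivity
  simp only [hprod, mul_left_comm _ c, integral_const_mul]
  rw [laplace_heatKernel hα hu hx hσ_nonneg, hc, ← Finset.prod_mul_distrib]
  refine Finset.prod_congr rfl fun j _ => ?_
  simp only [hσ]
  rw [laguerreLaplace_comp (Real.exp_pos _) (Real.exp_lt_one_iff.2 (neg_lt_zero.2 hu))
    (Real.exp_pos _) hv_lt (hs j), ← Real.exp_add, neg_add]

theorem heatKernel_chapman_kolmogorov (hα : ∀ j, -1 < α j) (hu : 0 < u) (hv : 0 < v)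
    (hx : x ∈ posOrthant d) :
    (fun z => ∫ y in posOrthant d, heatKernel α u x y * heatKernel α v y z)
      =ᵐ[volume.restrict (posOrthant d)] heatKernel α (u + v) x := by
  have hκ := ae_restrict_posOrthant fun y hy => isProbDensity_heatKernel hα hv (x := y) hy
  have hpu := isProbDensity_heatKernel hα hu hx
  refine ae_eq_of_laplace (ae_restrict_posOrthant fun y hy j => (pos_of_mem_posOrthant hy j).le)
    (hpu.mixture (measurable_uncurry_heatKernel α v) hκ).integrable
    (isProbDensity_heatKernel hα (add_pos hu hv) hx).integrable fun s hs => ?_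
  calc ∫ z in posOrthant d, (∫ y in posOrthant d, heatKernel α u x y * heatKernel α v y z) *
        Real.exp (-∑ j, s j * z j)
      = ∫ y in posOrthant d, heatKernel α u x y *
          ∫ z in posOrthant d, heatKernel α v y z * Real.exp (-∑ j, s j * z j) :=
        (IsProbDensity.integral_mul_integral_comm hpu.integrable
          (measurable_uncurry_heatKernel α v) hκ (by fun_prop)
          (ae_restrict_posOrthant fun z hz =>
            abs_exp_neg_sum_mul_le_one hs fun j => (pos_of_mem_posOrthant hz j).le)).symm
    _ = ∫ y in posOrthant d, heatKernel α u x y *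
          ∏ j, laguerreLaplace (α j) (Real.exp (-v)) (s j) (y j) :=
        setIntegral_congr_fun (measurableSet_posOrthant d) fun y hy =>
          congrArg _ (laplace_heatKernel hα hv hy hs)
    _ = _ := by
        rw [integral_heatKernel_mul_prod_laguerreLaplace hα hu hv hx hs,
          laplace_heatKernel hα (add_pos hu hv) hx hs]

theorem abs_heatSemigroup_le (hα : ∀ j, -1 < α j) (hu : 0 < u) (hM : ∀ y ∈ posOrthant d, |f y| ≤ M)
    (hx : x ∈ posOrthant d) : |heatSemigroup α u f x| ≤ M :=
  (isProbDensity_heatKernel hα hu hx).abs_integral_mul_le (ae_restrict_posOrthant hM)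

theorem heatSemigroup_heatSemigroup (hα : ∀ j, -1 < α j) (hu : 0 < u) (hv : 0 < v)
    (hf : Measurable f) (hM : ∀ y ∈ posOrthant d, |f y| ≤ M) (hx : x ∈ posOrthant d) :
    heatSemigroup α u (heatSemigroup α v f) x = heatSemigroup α (u + v) f x := by
  calc heatSemigroup α u (heatSemigroup α v f) x
      = ∫ z in posOrthant d,
          (∫ y in posOrthant d, heatKernel α u x y * heatKernel α v y z) * f z :=
        IsProbDensity.integral_mul_integral_comm (isProbDensity_heatKernel hα hu hx).integrable
          (measurable_uncurry_heatKernel α v)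
          (ae_restrict_posOrthant fun y hy => isProbDensity_heatKernel hα hv hy) hf
          (ae_restrict_posOrthant hM)
    _ = heatSemigroup α (u + v) f x :=
        integral_congr_ae ((heatKernel_chapman_kolmogorov hα hu hv hx).mono fun z hz => by
          simp only [hz])

end Heat

/-! ### The Poisson–Laguerre semigroup -/

section Poisson

variable {d : ℕ} {α : Fin d → ℝ}

/-- The Poisson–Laguerre semigroup at positive times, obtained from the heat semigroup by
subordination; `plP_eq_poissonSemigroup` identifies it with `plP`. -/
noncomputable def poissonSemigroup (α : Fin d → ℝ) (t : ℝ) (f : (Fin d → ℝ) → ℝ)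
    (x : Fin d → ℝ) : ℝ :=
  ∫ u in Ioi (0 : ℝ), levyDensity t u * heatSemigroup α u f x

@[fun_prop]
theorem measurable_poissonSemigroup {Ω : Type*} [MeasurableSpace Ω] {t : Ω → ℝ}
    {x : Ω → Fin d → ℝ} {f : (Fin d → ℝ) → ℝ} (ht : Measurable t) (hx : Measurable x)
    (hf : Measurable f) : Measurable fun ω => poissonSemigroup α (t ω) f (x ω) := by
  unfold poissonSemigroup
  exact (StronglyMeasurable.integral_prod_right
    (f := fun ω u => levyDensity (t ω) u * heatSemigroup α u f (x ω))
    (Measurable.stronglyMeasurable (by fun_prop))).measurable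

variable {t M : ℝ} {f : (Fin d → ℝ) → ℝ} {x : Fin d → ℝ}

theorem ae_abs_heatSemigroup_le (hα : ∀ j, -1 < α j) (hM : ∀ y ∈ posOrthant d, |f y| ≤ M)
    (hx : x ∈ posOrthant d) : ∀ᵐ u ∂volume.restrict (Ioi (0 : ℝ)), |heatSemigroup α u f x| ≤ M :=
  (ae_restrict_mem measurableSet_Ioi).mono fun _ hu => abs_heatSemigroup_le hα hu hM hx

theorem abs_poissonSemigroup_le (hα : ∀ j, -1 < α j) (ht : 0 < t)
    (hM : ∀ y ∈ posOrthant d, |f y| ≤ M) (hx : x ∈ posOrthant d) :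
    |poissonSemigroup α t f x| ≤ M :=
  (isProbDensity_levyDensity ht).abs_integral_mul_le (ae_abs_heatSemigroup_le hα hM hx)

theorem exists_hasDerivAt_poissonSemigroup (hα : ∀ j, -1 < α j) (ht : 0 < t) (hf : Measurable f)
    (hM : ∀ y ∈ posOrthant d, |f y| ≤ M) (hx : x ∈ posOrthant d) :
    ∃ D, HasDerivAt (fun t => poissonSemigroup α t f x) D t ∧ |D| ≤ 2 * M / t :=
  hasDerivAt_integral_levyDensity ht (by fun_prop) fun _ hu => abs_heatSemigroup_le hα hu hM hx

theorem heatSemigroup_poissonSemigroup (hα : ∀ j, -1 < α j) {u s : ℝ} (hu : 0 < u) (hs : 0 < s)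
    (hf : Measurable f) (hM : ∀ y ∈ posOrthant d, |f y| ≤ M) (hx : x ∈ posOrthant d) :
    heatSemigroup α u (poissonSemigroup α s f) x
      = ∫ v in Ioi (0 : ℝ), levyDensity s v * heatSemigroup α (u + v) f x := by
  have hint := IsProbDensity.integrable_uncurry_mul (μ := volume.restrict (posOrthant d))
    (ν := volume.restrict (Ioi (0 : ℝ))) (κ := fun _ => levyDensity s)
    (G := fun y v => heatSemigroup α v f y) (M := M) (isProbDensity_heatKernel hα hu hx).integrable
    (measurable_levyDensity measurable_const measurable_snd)
    (ae_of_all _ fun _ => isProbDensity_levyDensity hs)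
    (measurable_heatSemigroup measurable_snd measurable_fst hf)
    (ae_restrict_posOrthant fun y hy => ae_abs_heatSemigroup_le hα hM hy)
  refine (integral_mul_integral_comm hint).trans
    (setIntegral_congr_fun measurableSet_Ioi fun v hv => ?_)
  simp only [mul_left_comm _ (levyDensity s v), integral_const_mul]
  rw [← heatSemigroup_heatSemigroup hα hu hv hf hM hx]
  rfl

theorem poissonSemigroup_poissonSemigroup (hα : ∀ j, -1 < α j) {s : ℝ} (ht : 0 < t) (hs : 0 < s)
    (hf : Measurable f) (hM : ∀ y ∈ posOrthant d, |f y| ≤ M) (hx : x ∈ posOrthant d) :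
    poissonSemigroup α t (poissonSemigroup α s f) x = poissonSemigroup α (t + s) f x := by
  calc poissonSemigroup α t (poissonSemigroup α s f) x
      = ∫ u in Ioi (0 : ℝ), levyDensity t u *
          ∫ v in Ioi (0 : ℝ), levyDensity s v * heatSemigroup α (u + v) f x :=
        setIntegral_congr_fun measurableSet_Ioi fun u hu =>
          congrArg _ (heatSemigroup_poissonSemigroup hα hu hs hf hM hx)
    _ = poissonSemigroup α (t + s) f x :=
        integral_levyDensity_convolution (G := fun u => heatSemigroup α u f x) ht hs
          (by fun_prop) fun _ hu => abs_heatSemigroup_le hα hu hM hx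

theorem image_exp_neg_Ioi : (fun u : ℝ => Real.exp (-u)) '' Ioi 0 = Ioo 0 1 := by
  ext r
  constructor
  · rintro ⟨u, hu, rfl⟩
    exact ⟨Real.exp_pos _, Real.exp_lt_one_iff.2 (neg_lt_zero.2 hu)⟩
  · rintro ⟨h0, h1⟩
    exact ⟨-Real.log r, neg_pos.2 (Real.log_neg h0 h1), by simp [Real.exp_log h0]⟩

theorem integral_Ioo_eq_integral_exp_neg (g : ℝ → ℝ) :
    ∫ r in Ioo (0 : ℝ) 1, g r = ∫ u in Ioi (0 : ℝ), Real.exp (-u) * g (Real.exp (-u)) := by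
  rw [← image_exp_neg_Ioi, integral_image_eq_integral_abs_deriv_smul measurableSet_Ioi
    (f' := fun u => -Real.exp (-u))]
  · simp only [abs_neg, Real.abs_exp, smul_eq_mul]
  · intro u _
    simpa using ((hasDerivAt_neg u).exp).hasDerivWithinAt
  · intro u _ v _ h
    simpa using h

theorem plKernel_eq_integral_heatKernel (t : ℝ) {y : Fin d → ℝ} (hx : x ∈ posOrthant d)
    (hy : y ∈ posOrthant d) :
    plKernel d α t x y = ∫ u in Ioi (0 : ℝ), levyDensity t u * heatKernel α u x y := by
  rw [plKernel, integral_Ioo_eq_integral_exp_neg, ← integral_const_mul]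
  refine setIntegral_congr_fun measurableSet_Ioi fun u hu => ?_
  have hu : 0 < u := hu
  have hlt : Real.exp (-u) < 1 := Real.exp_lt_one_iff.2 (neg_lt_zero.2 hu)
  have : 1 - Real.exp (-u) ≠ 0 := (sub_pos.2 hlt).ne'
  have hu_rpow : u ^ ((3 : ℝ) / 2) = u * √u := by
    rw [show (3 : ℝ) / 2 = 1 / 2 + 1 by norm_num, Real.rpow_add_one hu.ne', ← Real.sqrt_eq_rpow,
      mul_comm]
  simp only [besselI_eq_laguerreKernel (Real.exp_pos (-u)) hlt (pos_of_mem_posOrthant hx _)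
    (pos_of_mem_posOrthant hy _), Finset.prod_mul_distrib, Finset.prod_const, Finset.card_univ,
    Fintype.card_fin]
  rw [Real.log_exp, neg_neg, hu_rpow, levyDensity, heatKernel, mul_neg, div_neg]
  field_simp

theorem plP_eq_poissonSemigroup (hα : ∀ j, -1 < α j) (ht : 0 < t) (hf : Measurable f)
    (hM : ∀ y ∈ posOrthant d, |f y| ≤ M) (hx : x ∈ posOrthant d) :
    plP d α t f x = poissonSemigroup α t f x := by
  rw [plP, if_neg ht.ne', setIntegral_congr_fun (measurableSet_posOrthant d) fun y hy => by
    rw [plKernel_eq_integral_heatKernel t hx hy]]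
  exact (IsProbDensity.integral_mul_integral_comm (κ := fun u => heatKernel α u x)
    (isProbDensity_levyDensity ht).integrable
    (measurable_heatKernel measurable_fst measurable_const measurable_snd)
    ((ae_restrict_mem measurableSet_Ioi).mono fun u hu => isProbDensity_heatKernel hα hu hx) hf
    (ae_restrict_posOrthant hM)).symm

theorem heatSemigroup_sub (hα : ∀ j, -1 < α j) {u N : ℝ} {g : (Fin d → ℝ) → ℝ} (hu : 0 < u)
    (hf : Measurable f) (hM : ∀ y ∈ posOrthant d, |f y| ≤ M) (hg : Measurable g)
    (hN : ∀ y ∈ posOrthant d, |g y| ≤ N) (hx : x ∈ posOrthant d) :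
    heatSemigroup α u (fun y => f y - g y) x = heatSemigroup α u f x - heatSemigroup α u g x := by
  have hk := isProbDensity_heatKernel hα hu hx
  simp only [heatSemigroup, mul_sub]
  exact integral_sub (hk.integrable_mul hf.aestronglyMeasurable (ae_restrict_posOrthant hM))
    (hk.integrable_mul hg.aestronglyMeasurable (ae_restrict_posOrthant hN))

theorem poissonSemigroup_sub (hα : ∀ j, -1 < α j) {N : ℝ} {g : (Fin d → ℝ) → ℝ} (ht : 0 < t)
    (hf : Measurable f) (hM : ∀ y ∈ posOrthant d, |f y| ≤ M) (hg : Measurable g)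
    (hN : ∀ y ∈ posOrthant d, |g y| ≤ N) (hx : x ∈ posOrthant d) :
    poissonSemigroup α t (fun y => f y - g y) x
      = poissonSemigroup α t f x - poissonSemigroup α t g x := by
  have hl := isProbDensity_levyDensity ht
  calc poissonSemigroup α t (fun y => f y - g y) x
      = ∫ u in Ioi (0 : ℝ), (levyDensity t u * heatSemigroup α u f x -
          levyDensity t u * heatSemigroup α u g x) :=
        setIntegral_congr_fun measurableSet_Ioi fun u hu => by
          simp only [heatSemigroup_sub hα hu hf hM hg hN hx, mul_sub]
    _ = _ := integral_sub
        (hl.integrable_mul (Measurable.aestronglyMeasurable (by fun_prop))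
          (ae_abs_heatSemigroup_le hα hM hx))
        (hl.integrable_mul (Measurable.aestronglyMeasurable (by fun_prop))
          (ae_abs_heatSemigroup_le hα hN hx))

end Poisson

/-! ### Symmetry with respect to the Laguerre measure -/

section Symmetry

variable {d : ℕ} {α : Fin d → ℝ}

/-- The density of the Laguerre measure `μ_α`, up to normalization; the heat semigroup is symmetric
with respect to it. -/
noncomputable def laguerreWeight (α x : Fin d → ℝ) : ℝ :=
  ∏ j, x j ^ α j * Real.exp (-x j)

theorem laguerreWeight_pos {x : Fin d → ℝ} (hx : x ∈ posOrthant d) : 0 < laguerreWeight α x :=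
  Finset.prod_pos fun j _ =>
    mul_pos (Real.rpow_pos_of_pos (pos_of_mem_posOrthant hx j) _) (Real.exp_pos _)

theorem integrable_laguerreWeight (hα : ∀ j, -1 < α j) :
    IntegrableOn (laguerreWeight α) (posOrthant d) := by
  rw [IntegrableOn, volume_restrict_posOrthant]
  refine Integrable.fintype_prod (f := fun j z => z ^ α j * Real.exp (-z)) fun j => ?_
  simpa [IntegrableOn] using integrableOn_rpow_mul_exp_neg_mul_rpow (hα j) one_pos one_pos

variable {t u M N : ℝ} {f g : (Fin d → ℝ) → ℝ} {x y s : Fin d → ℝ}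

theorem integrable_laguerreWeight_mul (hα : ∀ j, -1 < α j)
    (hg : AEStronglyMeasurable g (volume.restrict (posOrthant d)))
    (hN : ∀ y ∈ posOrthant d, |g y| ≤ N) :
    IntegrableOn (fun x => laguerreWeight α x * g x) (posOrthant d) :=
  (integrable_laguerreWeight hα).mul_bdd hg (ae_restrict_posOrthant hN)

theorem laguerreWeight_mul_heatKernel_comm (hu : 0 < u) (hx : x ∈ posOrthant d)
    (hy : y ∈ posOrthant d) :
    laguerreWeight α x * heatKernel α u x y = laguerreWeight α y * heatKernel α u y x := by
  simp only [laguerreWeight, heatKernel, ← Finset.prod_mul_distrib]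
  exact Finset.prod_congr rfl fun j _ => laguerreKernel_symm
    (Real.exp_lt_one_iff.2 (neg_lt_zero.2 hu)) (pos_of_mem_posOrthant hx j)
    (pos_of_mem_posOrthant hy j)

theorem integral_laguerreWeight_mul_heatSemigroup_comm (hα : ∀ j, -1 < α j) (hu : 0 < u)
    (hf : Measurable f) (hM : ∀ y ∈ posOrthant d, |f y| ≤ M) (hg : Measurable g)
    (hN : ∀ y ∈ posOrthant d, |g y| ≤ N) :
    ∫ x in posOrthant d, laguerreWeight α x * g x * heatSemigroup α u f x
      = ∫ y in posOrthant d, laguerreWeight α y * f y * heatSemigroup α u g y := by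
  calc ∫ x in posOrthant d, laguerreWeight α x * g x * heatSemigroup α u f x
      = ∫ y in posOrthant d,
          (∫ x in posOrthant d, laguerreWeight α x * g x * heatKernel α u x y) * f y :=
        IsProbDensity.integral_mul_integral_comm
          (integrable_laguerreWeight_mul hα hg.aestronglyMeasurable hN)
          (measurable_uncurry_heatKernel α u)
          (ae_restrict_posOrthant fun y hy => isProbDensity_heatKernel hα hu hy) hf
          (ae_restrict_posOrthant hM)
    _ = _ := setIntegral_congr_fun (measurableSet_posOrthant d) fun y hy => by
        simp only [heatSemigroup]
        rw [← integral_mul_const, ← integral_const_mul]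
        refine setIntegral_congr_fun (measurableSet_posOrthant d) fun x hx => ?_
        linear_combination g x * f y * laguerreWeight_mul_heatKernel_comm hu hx hy

theorem tendsto_heatSemigroup_exp (hα : ∀ j, -1 < α j) (hs : ∀ j, 0 ≤ s j)
    (hx : x ∈ posOrthant d) :
    Filter.Tendsto (fun u => heatSemigroup α u (fun y => Real.exp (-∑ j, s j * y j)) x)
      (nhdsWithin 0 (Ioi 0)) (nhds (Real.exp (-∑ j, s j * x j))) := by
  have hlim : Filter.Tendsto (fun u => ∏ j, laguerreLaplace (α j) (Real.exp (-u)) (s j) (x j))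
      (nhds 0) (nhds (∏ j, laguerreLaplace (α j) (Real.exp (-0)) (s j) (x j))) := by
    refine tendsto_finsetProd _ fun j _ => ContinuousAt.tendsto ?_
    have hden : (1 : ℝ) + s j * (1 - Real.exp (-0)) ≠ 0 := by simp
    have hbase : (1 : ℝ) / (1 + s j * (1 - Real.exp (-0))) ≠ 0 := by simp
    unfold laguerreLaplace
    fun_prop (disch := first | assumption | exact Or.inl hbase)
  have hzero : ∏ j, laguerreLaplace (α j) (Real.exp (-0)) (s j) (x j)
      = Real.exp (-∑ j, s j * x j) := by
    rw [← Finset.sum_neg_distrib, Real.exp_sum]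
    simp [laguerreLaplace]
  rw [← hzero]
  exact (hlim.mono_left nhdsWithin_le_nhds).congr'
    (eventually_mem_nhdsWithin.mono fun u hu => (laplace_heatKernel hα hu hx hs).symm)

theorem abs_exp_neg_sum_mul_le_one_of_mem_posOrthant (hs : ∀ j, 0 ≤ s j) :
    ∀ y ∈ posOrthant d, |Real.exp (-∑ j, s j * y j)| ≤ 1 := fun _ hy =>
  abs_exp_neg_sum_mul_le_one hs fun j => (pos_of_mem_posOrthant hy j).le

theorem tendsto_integral_laguerreWeight_mul_heatSemigroup (hα : ∀ j, -1 < α j)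
    (hf : Measurable f) (hM : ∀ y ∈ posOrthant d, |f y| ≤ M) (hs : ∀ j, 0 ≤ s j) :
    Filter.Tendsto (fun u => ∫ x in posOrthant d,
        laguerreWeight α x * Real.exp (-∑ j, s j * x j) * heatSemigroup α u f x)
      (nhdsWithin 0 (Ioi 0))
      (nhds (∫ x in posOrthant d, laguerreWeight α x * f x * Real.exp (-∑ j, s j * x j))) := by
  have hexp := abs_exp_neg_sum_mul_le_one_of_mem_posOrthant hs
  have hwf := integrable_laguerreWeight_mul hα hf.aestronglyMeasurable hM
  have hdual : Filter.Tendsto (fun u => ∫ y in posOrthant d, laguerreWeight α y * f y *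
        heatSemigroup α u (fun y => Real.exp (-∑ j, s j * y j)) y)
      (nhdsWithin 0 (Ioi 0))
      (nhds (∫ x in posOrthant d, laguerreWeight α x * f x * Real.exp (-∑ j, s j * x j))) := by
    refine tendsto_integral_filter_of_dominated_convergence
      (fun x => ‖laguerreWeight α x * f x‖) ?_ ?_ hwf.norm ?_
    · exact Filter.Eventually.of_forall fun u =>
        hwf.1.mul (Measurable.aestronglyMeasurable (by fun_prop))
    · refine eventually_mem_nhdsWithin.mono fun u hu => ae_restrict_posOrthant fun x hx => ?_
      rw [norm_mul]
      exact mul_le_of_le_one_right (norm_nonneg _) (abs_heatSemigroup_le hα hu hexp hx)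
    · exact ae_restrict_posOrthant fun x hx => (tendsto_heatSemigroup_exp hα hs hx).const_mul _
  exact hdual.congr' (eventually_mem_nhdsWithin.mono fun u hu =>
    (integral_laguerreWeight_mul_heatSemigroup_comm hα hu hf hM (by fun_prop) hexp).symm)

theorem integral_mul_poissonSemigroup (hα : ∀ j, -1 < α j) (ht : 0 < t) {a : (Fin d → ℝ) → ℝ}
    (ha : IntegrableOn a (posOrthant d)) (hf : Measurable f)
    (hM : ∀ y ∈ posOrthant d, |f y| ≤ M) :
    ∫ x in posOrthant d, a x * poissonSemigroup α t f x
      = ∫ u in Ioi (0 : ℝ), levyDensity t u *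
          ∫ x in posOrthant d, a x * heatSemigroup α u f x := by
  have hint := IsProbDensity.integrable_uncurry_mul (ν := volume.restrict (Ioi (0 : ℝ)))
    (κ := fun _ => levyDensity t) (G := fun y v => heatSemigroup α v f y) (M := M) ha
    (measurable_levyDensity measurable_const measurable_snd)
    (ae_of_all _ fun _ => isProbDensity_levyDensity ht)
    (measurable_heatSemigroup measurable_snd measurable_fst hf)
    (ae_restrict_posOrthant fun y hy => ae_abs_heatSemigroup_le hα hM hy)
  refine (integral_mul_integral_comm hint).trans (integral_congr_ae (ae_of_all _ fun u => ?_))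
  simp only [mul_left_comm _ (levyDensity t u), integral_const_mul]

theorem abs_integral_mul_le_of_abs_le {Ω : Type*} [MeasurableSpace Ω] {μ : Measure Ω}
    {a b : Ω → ℝ} (ha : Integrable a μ) (hb : ∀ᵐ x ∂μ, |b x| ≤ M) :
    |∫ x, a x * b x ∂μ| ≤ (∫ x, |a x| ∂μ) * M := by
  refine (norm_integral_le_of_norm_le (f := fun x => a x * b x) (ha.abs.mul_const M)
    (hb.mono fun x hx => ?_)).trans_eq (integral_mul_const M _)
  rw [norm_mul]
  exact mul_le_mul_of_nonneg_left hx (abs_nonneg _)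

theorem tendsto_integral_laguerreWeight_mul_poissonSemigroup (hα : ∀ j, -1 < α j)
    (hf : Measurable f) (hM : ∀ y ∈ posOrthant d, |f y| ≤ M) (hs : ∀ j, 0 ≤ s j) :
    Filter.Tendsto (fun t => ∫ x in posOrthant d,
        laguerreWeight α x * Real.exp (-∑ j, s j * x j) * poissonSemigroup α t f x)
      (nhdsWithin 0 (Ioi 0))
      (nhds (∫ x in posOrthant d, laguerreWeight α x * f x * Real.exp (-∑ j, s j * x j))) := by
  have hwe := integrable_laguerreWeight_mul hα (g := fun x => Real.exp (-∑ j, s j * x j))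
    (Measurable.aestronglyMeasurable (by fun_prop))
    (abs_exp_neg_sum_mul_le_one_of_mem_posOrthant hs)
  have hmeas : Measurable fun u => ∫ x in posOrthant d,
      laguerreWeight α x * Real.exp (-∑ j, s j * x j) * heatSemigroup α u f x := by
    unfold laguerreWeight
    exact (StronglyMeasurable.integral_prod_right (f := fun (u : ℝ) (x : Fin d → ℝ) =>
      (∏ j, x j ^ α j * Real.exp (-x j)) * Real.exp (-∑ j, s j * x j) * heatSemigroup α u f x)
      (Measurable.stronglyMeasurable (by fun_prop))).measurable
  have hbound : ∀ u > 0, |∫ x in posOrthant d, laguerreWeight α x * Real.exp (-∑ j, s j * x j) *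
      heatSemigroup α u f x| ≤ _ := fun u hu =>
    abs_integral_mul_le_of_abs_le hwe
      (ae_restrict_posOrthant fun x hx => abs_heatSemigroup_le hα hu hM hx)
  exact (tendsto_integral_levyDensity hmeas hbound
    (tendsto_integral_laguerreWeight_mul_heatSemigroup hα hf hM hs)).congr'
    (eventually_mem_nhdsWithin.mono fun t ht =>
      (integral_mul_poissonSemigroup hα ht hwe hf hM).symm)

theorem tendsto_integral_mul_poissonSemigroup (hα : ∀ j, -1 < α j) {a : (Fin d → ℝ) → ℝ}
    (ha : IntegrableOn a (posOrthant d)) (hf : Measurable f)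
    (hM : ∀ y ∈ posOrthant d, |f y| ≤ M)
    (hg : ∀ x ∈ posOrthant d,
      Filter.Tendsto (fun t => poissonSemigroup α t f x) (nhdsWithin 0 (Ioi 0)) (nhds (g x))) :
    Filter.Tendsto (fun t => ∫ x in posOrthant d, a x * poissonSemigroup α t f x)
      (nhdsWithin 0 (Ioi 0)) (nhds (∫ x in posOrthant d, a x * g x)) := by
  refine tendsto_integral_filter_of_dominated_convergence (fun x => ‖a x‖ * M) ?_ ?_
    (ha.norm.mul_const M) (ae_restrict_posOrthant fun x hx => (hg x hx).const_mul _)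
  · exact Filter.Eventually.of_forall fun t =>
      ha.1.mul (Measurable.aestronglyMeasurable (by fun_prop))
  · refine eventually_mem_nhdsWithin.mono fun t ht => ae_restrict_posOrthant fun x hx => ?_
    rw [norm_mul]
    exact mul_le_mul_of_nonneg_left (abs_poissonSemigroup_le hα ht hM hx) (norm_nonneg _)

/-- No continuity of `f` is assumed: `P_t f → f` in the weak sense by duality, and Laplace
transforms then identify the pointwise limit. -/
theorem ae_eq_of_tendsto_poissonSemigroup (hα : ∀ j, -1 < α j) (hf : Measurable f)
    (hM : ∀ y ∈ posOrthant d, |f y| ≤ M)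
    (hg : ∀ x ∈ posOrthant d,
      Filter.Tendsto (fun t => poissonSemigroup α t f x) (nhdsWithin 0 (Ioi 0)) (nhds (g x))) :
    f =ᵐ[volume.restrict (posOrthant d)] g := by
  have hg_meas : AEStronglyMeasurable g (volume.restrict (posOrthant d)) :=
    aestronglyMeasurable_of_tendsto_ae _
      (fun t => Measurable.aestronglyMeasurable (by fun_prop)) (ae_restrict_posOrthant hg)
  have hg_le : ∀ x ∈ posOrthant d, |g x| ≤ M := fun x hx =>
    le_of_tendsto (hg x hx).abs (eventually_mem_nhdsWithin.mono fun t ht =>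
      abs_poissonSemigroup_le hα ht hM hx)
  have hweighted : (fun x => laguerreWeight α x * f x) =ᵐ[volume.restrict (posOrthant d)]
      fun x => laguerreWeight α x * g x := by
    refine ae_eq_of_laplace
      (ae_restrict_posOrthant fun y hy j => (pos_of_mem_posOrthant hy j).le)
      (integrable_laguerreWeight_mul hα hf.aestronglyMeasurable hM)
      (integrable_laguerreWeight_mul hα hg_meas hg_le) fun s hs => ?_
    simp only [mul_right_comm _ (g _)]
    exact tendsto_nhds_unique
      (tendsto_integral_laguerreWeight_mul_poissonSemigroup hα hf hM hs)
      (tendsto_integral_mul_poissonSemigroup hα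
        (integrable_laguerreWeight_mul hα (Measurable.aestronglyMeasurable (by fun_prop))
          (abs_exp_neg_sum_mul_le_one_of_mem_posOrthant hs)) hf hM hg)
  filter_upwards [hweighted, ae_restrict_mem (measurableSet_posOrthant d)] with x hx hx_mem
  exact mul_left_cancel₀ (laguerreWeight_pos hx_mem).ne' hx

end Symmetry

/-! ### Singular integrals of functions with controlled derivative -/

section Calculus

/-- The growth condition `|h'(t)| ≤ A t^(β-1)` on `(0, ∞)` that defines the Lipschitz spaces;
differentiability is part of it because `deriv` is `0` where there is no derivative. -/
def DerivLeRpow (h : ℝ → ℝ) (A β : ℝ) : Prop :=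
  ∀ t > 0, DifferentiableAt ℝ h t ∧ |deriv h t| ≤ A * t ^ (β - 1)

variable {h : ℝ → ℝ} {A β s t : ℝ}

theorem DerivLeRpow.nonneg (hh : DerivLeRpow h A β) : 0 ≤ A := by
  simpa using (abs_nonneg _).trans (hh 1 one_pos).2

theorem DerivLeRpow.abs_sub_le_rpow_sub (hh : DerivLeRpow h A β) (hβ : 0 < β) (hs : 0 < s)
    (hst : s ≤ t) : |h t - h s| ≤ A / β * (t ^ β - s ^ β) := by
  have hpos : ∀ u ∈ Icc s t, 0 < u := fun u hu => hs.trans_le hu.1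
  have hder : ∀ u ∈ Icc s t, HasDerivAt (fun u => h u - h s) (deriv h u) u := fun u hu =>
    (hh u (hpos u hu)).1.hasDerivAt.sub_const _
  have hmaj : ∀ u ∈ Icc s t,
      HasDerivAt (fun u => A / β * (u ^ β - s ^ β)) (A * u ^ (β - 1)) u := fun u hu => by
    have := ((Real.hasDerivAt_rpow_const (p := β) (Or.inl (hpos u hu).ne')).sub_const
      (s ^ β)).const_mul (A / β)
    rwa [show A / β * (β * u ^ (β - 1)) = A * u ^ (β - 1) by field_simp] at this
  exact image_norm_le_of_norm_deriv_right_le_deriv_boundary' (a := s) (b := t)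
    (fun u hu => (hder u hu).continuousAt.continuousWithinAt)
    (fun u hu => (hder u (Ico_subset_Icc_self hu)).hasDerivWithinAt) (by simp)
    (fun u hu => (hmaj u hu).continuousAt.continuousWithinAt)
    (fun u hu => (hmaj u (Ico_subset_Icc_self hu)).hasDerivWithinAt)
    (fun u hu => (hh u (hpos u (Ico_subset_Icc_self hu))).2) (right_mem_Icc.2 hst)

theorem DerivLeRpow.abs_sub_le_mul {q : ℝ} (hh : DerivLeRpow h A β) (hβ : β ≤ 1) (hq : 0 < q)
    (hs : q ≤ s) (ht : q ≤ t) : |h t - h s| ≤ A * q ^ (β - 1) * |t - s| := by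
  refine Convex.norm_image_sub_le_of_norm_deriv_le (s := Ici q)
    (fun u hu => (hh u (hq.trans_le hu)).1) (fun u hu => ?_) (convex_Ici q) hs ht
  exact (hh u (hq.trans_le hu)).2.trans (mul_le_mul_of_nonneg_left
    (Real.rpow_le_rpow_of_nonpos hq hu (sub_nonpos.2 hβ)) hh.nonneg)

theorem DerivLeRpow.exists_tendsto_nhdsGT_zero (hh : DerivLeRpow h A β) (hβ : 0 < β) :
    ∃ L, Filter.Tendsto h (nhdsWithin 0 (Ioi 0)) (nhds L) := by
  have hmono : MonotoneOn (fun t => h t + A / β * t ^ β) (Ioi 0) := by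
    intro s hs t _ hst
    have := neg_le_of_abs_le (hh.abs_sub_le_rpow_sub hβ hs hst)
    simp only
    linarith
  have hbdd : BddBelow ((fun t => h t + A / β * t ^ β) '' Ioi 0) := by
    refine ⟨h 1 - A / β, ?_⟩
    rintro _ ⟨t, ht, rfl⟩
    have hA : 0 ≤ A / β := div_nonneg hh.nonneg hβ.le
    rcases le_total 1 t with h1t | ht1
    · have := hmono (mem_Ioi.2 one_pos) ht h1t
      simp only [Real.one_rpow] at this ⊢
      linarith
    · have hdiff := le_of_abs_le (hh.abs_sub_le_rpow_sub hβ ht ht1)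
      have : 0 ≤ A / β * t ^ β := mul_nonneg hA (Real.rpow_nonneg (le_of_lt ht) _)
      rw [Real.one_rpow] at hdiff
      simp only
      linarith
  have hpow : Filter.Tendsto (fun t : ℝ => A / β * t ^ β) (nhdsWithin 0 (Ioi 0)) (nhds 0) := by
    have : ContinuousAt (fun t : ℝ => A / β * t ^ β) 0 :=
      (Real.continuousAt_rpow_const 0 β (Or.inr hβ.le)).const_mul _
    simpa [Real.zero_rpow hβ.ne'] using this.tendsto.mono_left nhdsWithin_le_nhds
  have hlim := (hmono.tendsto_nhdsGT hbdd).sub hpow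
  simp only [add_sub_cancel_right, sub_zero] at hlim
  exact ⟨_, hlim⟩

theorem DerivLeRpow.abs_sub_le_of_tendsto {L : ℝ} (hh : DerivLeRpow h A β) (hβ : 0 < β)
    (hL : Filter.Tendsto h (nhdsWithin 0 (Ioi 0)) (nhds L)) (ht : 0 < t) :
    |h t - L| ≤ A / β * t ^ β := by
  refine le_of_tendsto (tendsto_const_nhds.sub hL).abs ?_
  filter_upwards [Ioo_mem_nhdsGT ht] with s hs
  refine (hh.abs_sub_le_rpow_sub hβ hs.1 hs.2.le).trans ?_
  have : 0 ≤ s ^ β := Real.rpow_nonneg hs.1.le _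
  exact mul_le_mul_of_nonneg_left (by linarith) (div_nonneg hh.nonneg hβ.le)

variable {lam p a b T : ℝ} {φ : ℝ → ℝ}

theorem rpow_mul_min_le_left (hs : 0 < s) :
    s ^ (-lam - 1) * min (a * s ^ p) b ≤ a * s ^ (p - lam - 1) := by
  calc s ^ (-lam - 1) * min (a * s ^ p) b ≤ s ^ (-lam - 1) * (a * s ^ p) :=
        mul_le_mul_of_nonneg_left (min_le_left _ _) (Real.rpow_nonneg hs.le _)
    _ = a * s ^ (p - lam - 1) := by
        rw [mul_left_comm, ← Real.rpow_add hs, show -lam - 1 + p = p - lam - 1 by ring]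

theorem rpow_mul_min_le_right (hs : 0 < s) :
    s ^ (-lam - 1) * min (a * s ^ p) b ≤ b * s ^ (-lam - 1) := by
  rw [mul_comm b]
  exact mul_le_mul_of_nonneg_left (min_le_right _ _) (Real.rpow_nonneg hs.le _)

theorem integrableOn_const_mul_rpow_Ioc (a : ℝ) (hp : lam < p) (hT : 0 < T) :
    IntegrableOn (fun s : ℝ => a * s ^ (p - lam - 1)) (Ioc 0 T) :=
  ((intervalIntegrable_iff_integrableOn_Ioc_of_le hT.le).1
    (intervalIntegral.intervalIntegrable_rpow' (by linarith))).const_mul a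

theorem integrableOn_rpow_mul_min (hlam : 0 < lam) (hp : lam < p) (ha : 0 ≤ a) (hb : 0 ≤ b) :
    IntegrableOn (fun s : ℝ => s ^ (-lam - 1) * min (a * s ^ p) b) (Ioi 0) := by
  have hmeas : Measurable fun s : ℝ => s ^ (-lam - 1) * min (a * s ^ p) b := by fun_prop
  have hnorm : ∀ s : ℝ, 0 < s → ‖s ^ (-lam - 1) * min (a * s ^ p) b‖
      = s ^ (-lam - 1) * min (a * s ^ p) b := fun s hs => Real.norm_of_nonneg (by positivity)
  rw [← Ioc_union_Ioi_eq_Ioi zero_le_one]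
  refine IntegrableOn.union ?_ ?_
  · refine (integrableOn_const_mul_rpow_Ioc a hp one_pos).mono' hmeas.aestronglyMeasurable ?_
    filter_upwards [ae_restrict_mem measurableSet_Ioc] with s hs
    exact (hnorm s hs.1).trans_le (rpow_mul_min_le_left hs.1)
  · refine ((integrableOn_Ioi_rpow_of_lt (a := -lam - 1) (by linarith) one_pos).const_mul b).mono'
      hmeas.aestronglyMeasurable ?_
    filter_upwards [ae_restrict_mem measurableSet_Ioi] with s hs
    exact (hnorm s (one_pos.trans hs)).trans_le (rpow_mul_min_le_right (one_pos.trans hs))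

theorem integral_rpow_mul_min_le (hlam : 0 < lam) (hp : lam < p) (ha : 0 ≤ a) (hb : 0 ≤ b)
    (hT : 0 < T) :
    ∫ s in Ioi (0 : ℝ), s ^ (-lam - 1) * min (a * s ^ p) b
      ≤ a * T ^ (p - lam) / (p - lam) + b * T ^ (-lam) / lam := by
  have hint := integrableOn_rpow_mul_min hlam hp ha hb
  have hint_Ioc := hint.mono_set (Ioc_subset_Ioi_self : Ioc 0 T ⊆ Ioi 0)
  have hint_Ioi := hint.mono_set (Ioi_subset_Ioi hT.le)
  have hexp : -lam - 1 < -1 := by linarith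
  rw [← Ioc_union_Ioi_eq_Ioi hT.le,
    setIntegral_union Ioc_disjoint_Ioi_same measurableSet_Ioi hint_Ioc hint_Ioi]
  refine add_le_add
    ((setIntegral_mono_on hint_Ioc (integrableOn_const_mul_rpow_Ioc a hp hT) measurableSet_Ioc
      fun s hs => rpow_mul_min_le_left hs.1).trans_eq ?_)
    ((setIntegral_mono_on hint_Ioi ((integrableOn_Ioi_rpow_of_lt hexp hT).const_mul b)
      measurableSet_Ioi fun s hs => rpow_mul_min_le_right (hT.trans hs)).trans_eq ?_)
  · rw [integral_const_mul, ← intervalIntegral.integral_of_le hT.le,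
      integral_rpow (Or.inl (by linarith)), sub_add_cancel, Real.zero_rpow (sub_pos.2 hp).ne',
      sub_zero, mul_div_assoc]
  · rw [integral_const_mul, integral_Ioi_rpow_of_lt hexp hT, sub_add_cancel, neg_div_neg_eq,
      mul_div_assoc]

theorem norm_rpow_mul_le_rpow_mul_min (h_pow : ∀ s > 0, |φ s| ≤ a * s ^ p)
    (h_bdd : ∀ s > 0, |φ s| ≤ b) (hs : 0 < s) :
    ‖s ^ (-lam - 1) * φ s‖ ≤ s ^ (-lam - 1) * min (a * s ^ p) b := by
  have hnonneg : 0 ≤ s ^ (-lam - 1) := Real.rpow_nonneg hs.le _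
  rw [norm_mul, Real.norm_of_nonneg hnonneg]
  exact mul_le_mul_of_nonneg_left (le_min (h_pow s hs) (h_bdd s hs)) hnonneg

theorem integrableOn_rpow_mul_of_abs_le (hlam : 0 < lam) (hp : lam < p) (ha : 0 ≤ a) (hb : 0 ≤ b)
    (hφ : Measurable φ) (h_pow : ∀ s > 0, |φ s| ≤ a * s ^ p) (h_bdd : ∀ s > 0, |φ s| ≤ b) :
    IntegrableOn (fun s : ℝ => s ^ (-lam - 1) * φ s) (Ioi 0) :=
  (integrableOn_rpow_mul_min hlam hp ha hb).mono' (Measurable.aestronglyMeasurable (by fun_prop))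
    ((ae_restrict_mem measurableSet_Ioi).mono fun _ hs =>
      norm_rpow_mul_le_rpow_mul_min h_pow h_bdd hs)

theorem integral_abs_rpow_mul_le (hlam : 0 < lam) (hp : lam < p) (ha : 0 ≤ a) (hb : 0 ≤ b)
    (hT : 0 < T) (h_pow : ∀ s > 0, |φ s| ≤ a * s ^ p) (h_bdd : ∀ s > 0, |φ s| ≤ b) :
    ∫ s in Ioi (0 : ℝ), |s ^ (-lam - 1) * φ s|
      ≤ a * T ^ (p - lam) / (p - lam) + b * T ^ (-lam) / lam :=
  (integral_mono_of_nonneg (ae_of_all _ fun _ => abs_nonneg _)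
    (integrableOn_rpow_mul_min hlam hp ha hb)
    ((ae_restrict_mem measurableSet_Ioi).mono fun _ hs =>
      norm_rpow_mul_le_rpow_mul_min h_pow h_bdd hs)).trans
    (integral_rpow_mul_min_le hlam hp ha hb hT)

theorem eq_of_tendsto_of_integrableOn_rpow_mul_sub {L c : ℝ} (hlam : 0 < lam)
    (hL : Filter.Tendsto h (nhdsWithin 0 (Ioi 0)) (nhds L))
    (hint : IntegrableOn (fun s : ℝ => s ^ (-lam - 1) * (h s - c)) (Ioi 0)) : L = c := by
  by_contra hne
  have hδ : 0 < |L - c| / 2 := half_pos (abs_pos.2 (sub_ne_zero.2 hne))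
  have hfar : ∀ᶠ s in nhdsWithin 0 (Ioi 0), |L - c| / 2 < |h s - c| :=
    (hL.sub_const c).abs.eventually (lt_mem_nhds (by linarith))
  obtain ⟨ε, hε, hsub⟩ := mem_nhdsGT_iff_exists_Ioo_subset.1 hfar
  have hpow : IntegrableOn (fun s : ℝ => s ^ (-lam - 1)) (Ioo 0 ε) := by
    refine (((hint.mono_set Ioo_subset_Ioi_self).norm).const_mul (1 / (|L - c| / 2))).mono'
      (Measurable.aestronglyMeasurable (by fun_prop)) ?_
    filter_upwards [ae_restrict_mem measurableSet_Ioo] with s hs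
    have hnonneg : 0 ≤ s ^ (-lam - 1) := Real.rpow_nonneg hs.1.le _
    rw [norm_mul, Real.norm_of_nonneg hnonneg, Real.norm_eq_abs, one_div_mul_eq_div,
      le_div_iff₀ hδ]
    exact mul_le_mul_of_nonneg_left (hsub hs).le hnonneg
  linarith [(intervalIntegral.integrableOn_Ioo_rpow_iff hε).1 hpow]

end Calculus

/-! ### The fractional derivative on Lipschitz functions -/

section Lipschitz

variable {d : ℕ} {α : Fin d → ℝ} {f : (Fin d → ℝ) → ℝ} {M A β lam s t : ℝ} {x : Fin d → ℝ}

/-- The normalizing constant `c_λ` of the Laguerre fractional derivative. -/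
noncomputable def fracDerivConst (lam : ℝ) : ℝ :=
  ∫ u in Ioi (0 : ℝ), u ^ (-lam - 1) * (Real.exp (-u) - 1)

theorem derivLeRpow_poissonSemigroup (hα : ∀ j, -1 < α j) (hf : Measurable f)
    (hM : ∀ y ∈ posOrthant d, |f y| ≤ M) (hx : x ∈ posOrthant d)
    (hA : ∀ t > (0 : ℝ), |deriv (fun u => plP d α u f x) t| ≤ A * t ^ (β - 1)) :
    DerivLeRpow (fun t => poissonSemigroup α t f x) A β := by
  intro t ht
  obtain ⟨D, hD, -⟩ := exists_hasDerivAt_poissonSemigroup hα ht hf hM hx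
  have heq : (fun u => plP d α u f x) =ᶠ[nhds t] fun u => poissonSemigroup α u f x :=
    (lt_mem_nhds ht).mono fun u hu => plP_eq_poissonSemigroup hα hu hf hM hx
  exact ⟨hD.differentiableAt, heq.deriv_eq ▸ hA t ht⟩

theorem laguerreFracDeriv_eq (hα : ∀ j, -1 < α j) (hf : Measurable f)
    (hM : ∀ y ∈ posOrthant d, |f y| ≤ M) (hx : x ∈ posOrthant d) :
    laguerreFracDeriv d α lam f x = (fracDerivConst lam)⁻¹ *
      ∫ s in Ioi (0 : ℝ), s ^ (-lam - 1) * (poissonSemigroup α s f x - f x) := by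
  rw [laguerreFracDeriv, one_div, ← fracDerivConst]
  congr 1
  exact setIntegral_congr_fun measurableSet_Ioi fun s hs => by
    simp only [plP_eq_poissonSemigroup hα hs hf hM hx]

theorem abs_poissonSemigroup_sub_self_le (hα : ∀ j, -1 < α j)
    (hM : ∀ y ∈ posOrthant d, |f y| ≤ M) (ht : 0 < t) (hx : x ∈ posOrthant d) :
    |poissonSemigroup α t f x - f x| ≤ M + M :=
  (abs_sub _ _).trans (add_le_add (abs_poissonSemigroup_le hα ht hM hx) (hM x hx))

theorem abs_laguerreFracDeriv_le (hα : ∀ j, -1 < α j) (hlam : 0 < lam) (hlamβ : lam < β)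
    (hf : Measurable f) (hM : ∀ y ∈ posOrthant d, |f y| ≤ M) (hx : x ∈ posOrthant d)
    (hh : DerivLeRpow (fun t => poissonSemigroup α t f x) A β) :
    |laguerreFracDeriv d α lam f x|
      ≤ |(fracDerivConst lam)⁻¹| * (1 / β / (β - lam) * A + 2 / lam * M) := by
  have hβ : 0 < β := hlam.trans hlamβ
  have hM0 : 0 ≤ M := (abs_nonneg _).trans (hM x hx)
  have hA0 : 0 ≤ A := hh.nonneg
  have : 0 < β - lam := sub_pos.2 hlamβ
  rw [laguerreFracDeriv_eq hα hf hM hx, abs_mul]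
  refine mul_le_mul_of_nonneg_left ?_ (abs_nonneg _)
  by_cases hint : IntegrableOn (fun s => s ^ (-lam - 1) * (poissonSemigroup α s f x - f x)) (Ioi 0)
  · obtain ⟨L, hL⟩ := hh.exists_tendsto_nhdsGT_zero hβ
    obtain rfl := eq_of_tendsto_of_integrableOn_rpow_mul_sub hlam hL hint
    refine abs_integral_le_integral_abs.trans ((integral_abs_rpow_mul_le hlam hlamβ
      (div_nonneg hA0 hβ.le) (add_nonneg hM0 hM0) one_pos
      (fun s hs => hh.abs_sub_le_of_tendsto hβ hL hs)
      fun s hs => abs_poissonSemigroup_sub_self_le hα hM hs hx).trans_eq ?_)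
    simp only [Real.one_rpow]
    ring
  · rw [integral_undef hint, abs_zero]
    positivity

theorem ae_abs_poissonSemigroup_sub_self_le (hα : ∀ j, -1 < α j) (hβ : 0 < β) (hf : Measurable f)
    (hM : ∀ y ∈ posOrthant d, |f y| ≤ M)
    (hh : ∀ x ∈ posOrthant d, DerivLeRpow (fun t => poissonSemigroup α t f x) A β) :
    ∀ᵐ y ∂volume.restrict (posOrthant d), ∀ s > 0,
      |poissonSemigroup α s f y - f y| ≤ A / β * s ^ β := by
  choose! g hg using fun x hx => (hh x hx).exists_tendsto_nhdsGT_zero hβ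
  filter_upwards [ae_eq_of_tendsto_poissonSemigroup hα hf hM hg,
    ae_restrict_mem (measurableSet_posOrthant d)] with y hy hy_mem s hs
  rw [hy]
  exact (hh y hy_mem).abs_sub_le_of_tendsto hβ (hg y hy_mem) hs

theorem integrableOn_plKernel (hα : ∀ j, -1 < α j) (ht : 0 < t) (hx : x ∈ posOrthant d) :
    IntegrableOn (plKernel d α t x) (posOrthant d) :=
  ((isProbDensity_levyDensity ht).mixture (κ := fun u => heatKernel α u x)
    (measurable_heatKernel measurable_fst measurable_const measurable_snd)
    ((ae_restrict_mem measurableSet_Ioi).mono fun _ hu =>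
      isProbDensity_heatKernel hα hu hx)).integrable.congr
    (ae_restrict_posOrthant fun _ hy => (plKernel_eq_integral_heatKernel t hx hy).symm)

theorem integral_plKernel_mul_poissonSemigroup_sub (hα : ∀ j, -1 < α j) (ht : 0 < t) (hs : 0 < s)
    (hf : Measurable f) (hM : ∀ y ∈ posOrthant d, |f y| ≤ M) (hx : x ∈ posOrthant d) :
    ∫ y in posOrthant d, plKernel d α t x y * (poissonSemigroup α s f y - f y)
      = poissonSemigroup α (t + s) f x - poissonSemigroup α t f x := by
  have hP : Measurable (poissonSemigroup α s f) := by fun_prop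
  have hplP := plP_eq_poissonSemigroup hα ht (hP.sub hf)
    (fun y hy => abs_poissonSemigroup_sub_self_le hα hM hs hy) hx
  rw [plP, if_neg ht.ne'] at hplP
  rw [← poissonSemigroup_poissonSemigroup hα ht hs hf hM hx, ← poissonSemigroup_sub hα ht hP
    (fun y hy => abs_poissonSemigroup_le hα hs hM hy) hf hM hx]
  exact hplP

theorem integrable_uncurry_plKernel_mul_rpow_mul (hα : ∀ j, -1 < α j) (hlam : 0 < lam)
    (hlamβ : lam < β) (hf : Measurable f) (hM : ∀ y ∈ posOrthant d, |f y| ≤ M)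
    (hh : ∀ x ∈ posOrthant d, DerivLeRpow (fun t => poissonSemigroup α t f x) A β) (ht : 0 < t)
    (hx : x ∈ posOrthant d) :
    Integrable (Function.uncurry fun (y : Fin d → ℝ) (s : ℝ) =>
        plKernel d α t x y * (s ^ (-lam - 1) * (poissonSemigroup α s f y - f y)))
      ((volume.restrict (posOrthant d)).prod (volume.restrict (Ioi 0))) := by
  have hβ : 0 < β := hlam.trans hlamβ
  have hM0 : 0 ≤ M + M := by linarith [(abs_nonneg _).trans (hM x hx)]
  have hA0 : 0 ≤ A / β := div_nonneg (hh x hx).nonneg hβ.le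
  have hmeas : Measurable (Function.uncurry fun (y : Fin d → ℝ) (s : ℝ) =>
      s ^ (-lam - 1) * (poissonSemigroup α s f y - f y)) := by
    unfold Function.uncurry
    fun_prop
  have hae := (ae_abs_poissonSemigroup_sub_self_le hα hβ hf hM hh).and
    (ae_restrict_mem (measurableSet_posOrthant d))
  exact integrable_uncurry_mul_of_integral_abs_le (integrableOn_plKernel hα ht hx) hmeas
    (hae.mono fun y hy => integrableOn_rpow_mul_of_abs_le hlam hlamβ hA0 hM0 (by fun_prop) hy.1
      fun s hs => abs_poissonSemigroup_sub_self_le hα hM hs hy.2)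
    (hae.mono fun y hy => integral_abs_rpow_mul_le hlam hlamβ hA0 hM0 one_pos hy.1
      fun s hs => abs_poissonSemigroup_sub_self_le hα hM hs hy.2)

theorem plP_laguerreFracDeriv (hα : ∀ j, -1 < α j) (hlam : 0 < lam) (hlamβ : lam < β)
    (hf : Measurable f) (hM : ∀ y ∈ posOrthant d, |f y| ≤ M)
    (hh : ∀ x ∈ posOrthant d, DerivLeRpow (fun t => poissonSemigroup α t f x) A β) (ht : 0 < t)
    (hx : x ∈ posOrthant d) :
    plP d α t (laguerreFracDeriv d α lam f) x = (fracDerivConst lam)⁻¹ *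
      ∫ s in Ioi (0 : ℝ), s ^ (-lam - 1) *
        (poissonSemigroup α (t + s) f x - poissonSemigroup α t f x) := by
  calc plP d α t (laguerreFracDeriv d α lam f) x
      = ∫ y in posOrthant d, (fracDerivConst lam)⁻¹ * (plKernel d α t x y *
          ∫ s in Ioi (0 : ℝ), s ^ (-lam - 1) * (poissonSemigroup α s f y - f y)) := by
        rw [plP, if_neg ht.ne']
        refine setIntegral_congr_fun (measurableSet_posOrthant d) fun y hy => ?_
        simp only [laguerreFracDeriv_eq hα hf hM hy, mul_left_comm _ (fracDerivConst lam)⁻¹]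
    _ = (fracDerivConst lam)⁻¹ * ∫ s in Ioi (0 : ℝ), ∫ y in posOrthant d,
          plKernel d α t x y * (s ^ (-lam - 1) * (poissonSemigroup α s f y - f y)) := by
        rw [integral_const_mul, integral_mul_integral_comm
          (integrable_uncurry_plKernel_mul_rpow_mul hα hlam hlamβ hf hM hh ht hx)]
    _ = _ := by
        congr 1
        refine setIntegral_congr_fun measurableSet_Ioi fun s hs => ?_
        simp only [mul_left_comm _ (s ^ (-lam - 1)), integral_const_mul,
          integral_plKernel_mul_poissonSemigroup_sub hα ht hs hf hM hx]

theorem abs_poissonSemigroup_sub_poissonSemigroup_le (hα : ∀ j, -1 < α j) {q : ℝ} (hq : 0 < q)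
    (hf : Measurable f) (hM : ∀ y ∈ posOrthant d, |f y| ≤ M) (hx : x ∈ posOrthant d) (hs : q ≤ s)
    (ht : q ≤ t) : |poissonSemigroup α t f x - poissonSemigroup α s f x| ≤ 2 * M / q * |t - s| := by
  have hM0 : 0 ≤ M := (abs_nonneg _).trans (hM x hx)
  choose! D hD hD_le using fun r (hr : r ∈ Ici q) =>
    exists_hasDerivAt_poissonSemigroup hα (hq.trans_le hr) hf hM hx
  exact Convex.norm_image_sub_le_of_norm_hasDerivWithin_le
    (fun r hr => (hD r hr).hasDerivWithinAt)
    (fun r hr => (hD_le r hr).trans (div_le_div_of_nonneg_left (by positivity) hq hr))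
    (convex_Ici q) hs ht

theorem abs_increment_le (hβ : β ≤ 1) (hh : DerivLeRpow (fun t => poissonSemigroup α t f x) A β)
    (ht : 0 < t) (hs : 0 < s) :
    |poissonSemigroup α (t + s) f x - poissonSemigroup α t f x| ≤ A * t ^ (β - 1) * s := by
  have := hh.abs_sub_le_mul hβ ht le_rfl (le_add_of_nonneg_right hs.le)
  rwa [add_sub_cancel_left, abs_of_pos hs] at this

/-- The increment `P_{r+s} f - P_r f` is `P_{r-q}` applied to the small function
`P_{q+s} f - P_q f`, so the two factors of the bound come from two applications of the semigroup. -/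
theorem abs_second_difference_le_mul (hα : ∀ j, -1 < α j) (hβ : β ≤ 1) (hf : Measurable f)
    (hM : ∀ y ∈ posOrthant d, |f y| ≤ M)
    (hh : ∀ x ∈ posOrthant d, DerivLeRpow (fun t => poissonSemigroup α t f x) A β) {q τ : ℝ}
    (hq : 0 < q) (hs : 0 < s) (hτ : 2 * q ≤ τ) (ht : 2 * q ≤ t) (hx : x ∈ posOrthant d) :
    |(poissonSemigroup α (τ + s) f x - poissonSemigroup α τ f x) -
        (poissonSemigroup α (t + s) f x - poissonSemigroup α t f x)|
      ≤ 2 * (A * q ^ (β - 1) * s) / q * |τ - t| := by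
  have hqs : 0 < q + s := add_pos hq hs
  have hincr : ∀ r ≥ 2 * q, poissonSemigroup α (r + s) f x - poissonSemigroup α r f x
      = poissonSemigroup α (r - q)
        (fun y => poissonSemigroup α (q + s) f y - poissonSemigroup α q f y) x := by
    intro r hr
    have hrq : 0 < r - q := by linarith
    rw [poissonSemigroup_sub hα hrq (by fun_prop)
        (fun y hy => abs_poissonSemigroup_le hα hqs hM hy) (by fun_prop)
        (fun y hy => abs_poissonSemigroup_le hα hq hM hy) hx,
      poissonSemigroup_poissonSemigroup hα hrq hqs hf hM hx,
      poissonSemigroup_poissonSemigroup hα hrq hq hf hM hx, sub_add_cancel, ← add_assoc,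
      sub_add_cancel]
  rw [hincr τ hτ, hincr t ht, ← sub_sub_sub_cancel_right τ t q]
  exact abs_poissonSemigroup_sub_poissonSemigroup_le hα hq (by fun_prop)
    (fun y hy => abs_increment_le hβ (hh y hy) hq hs) hx (by linarith) (by linarith)

theorem abs_second_difference_le (hβ : β ≤ 1)
    (hh : DerivLeRpow (fun t => poissonSemigroup α t f x) A β) {q τ : ℝ} (hq : 0 < q) (hs : 0 < s)
    (hτ : q ≤ τ) (ht : q ≤ t) :
    |(poissonSemigroup α (τ + s) f x - poissonSemigroup α τ f x) -
        (poissonSemigroup α (t + s) f x - poissonSemigroup α t f x)|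
      ≤ 2 * A * q ^ (β - 1) * |τ - t| := by
  have hshift := hh.abs_sub_le_mul hβ hq (ht.trans (le_add_of_nonneg_right hs.le))
    (hτ.trans (le_add_of_nonneg_right hs.le))
  rw [add_sub_add_right_eq_sub] at hshift
  rw [sub_sub_sub_comm]
  refine (abs_sub _ _).trans ((add_le_add hshift (hh.abs_sub_le_mul hβ hq ht hτ)).trans_eq ?_)
  ring

theorem integrableOn_rpow_mul_increment (hα : ∀ j, -1 < α j) (hlam : 0 < lam) (hlam1 : lam < 1)
    (hβ : β ≤ 1) (hf : Measurable f) (hM : ∀ y ∈ posOrthant d, |f y| ≤ M) (ht : 0 < t)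
    (hx : x ∈ posOrthant d) (hh : DerivLeRpow (fun t => poissonSemigroup α t f x) A β) :
    IntegrableOn (fun s : ℝ => s ^ (-lam - 1) *
      (poissonSemigroup α (t + s) f x - poissonSemigroup α t f x)) (Ioi 0) := by
  have hM0 : 0 ≤ M := (abs_nonneg _).trans (hM x hx)
  refine integrableOn_rpow_mul_of_abs_le hlam hlam1
    (mul_nonneg hh.nonneg (Real.rpow_nonneg ht.le (β - 1))) (add_nonneg hM0 hM0) (by fun_prop)
    (fun s hs => ?_) fun s hs => ?_
  · rw [Real.rpow_one]
    exact abs_increment_le hβ hh ht hs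
  · exact (abs_sub _ _).trans (add_le_add (abs_poissonSemigroup_le hα (add_pos ht hs) hM hx)
      (abs_poissonSemigroup_le hα ht hM hx))

theorem integral_abs_rpow_mul_second_difference_le (hα : ∀ j, -1 < α j) (hlam : 0 < lam)
    (hlam1 : lam < 1) (hβ : β ≤ 1) (hf : Measurable f) (hM : ∀ y ∈ posOrthant d, |f y| ≤ M)
    (hh : ∀ x ∈ posOrthant d, DerivLeRpow (fun t => poissonSemigroup α t f x) A β) {q τ : ℝ}
    (hq : 0 < q) (hτ : 2 * q ≤ τ) (ht : 2 * q ≤ t) (hx : x ∈ posOrthant d) :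
    ∫ s in Ioi (0 : ℝ), |s ^ (-lam - 1) *
        ((poissonSemigroup α (τ + s) f x - poissonSemigroup α τ f x) -
          (poissonSemigroup α (t + s) f x - poissonSemigroup α t f x))|
      ≤ 2 * A * (1 / (1 - lam) + 1 / lam) * q ^ (β - lam - 1) * |τ - t| := by
  have hA0 : 0 ≤ A := (hh x hx).nonneg
  refine (integral_abs_rpow_mul_le (p := 1) (a := 2 * A * q ^ (β - 1) / q * |τ - t|)
    (b := 2 * A * q ^ (β - 1) * |τ - t|) hlam hlam1 (by positivity) (by positivity) hq
    (fun s hs => ?_) fun s hs => ?_).trans_eq ?_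
  · refine (abs_second_difference_le_mul hα hβ hf hM hh hq hs hτ ht hx).trans_eq ?_
    rw [Real.rpow_one]
    ring
  · exact abs_second_difference_le hβ (hh x hx) hq hs (by linarith) (by linarith)
  · have hsplit : q ^ (β - 1) / q * q ^ (1 - lam) = q ^ (β - lam - 1) := by
      rw [← Real.rpow_sub_one hq.ne', ← Real.rpow_add hq]
      ring_nf
    have htail : q ^ (β - 1) * q ^ (-lam) = q ^ (β - lam - 1) := by
      rw [← Real.rpow_add hq]
      ring_nf
    linear_combination 2 * A * |τ - t| / (1 - lam) * hsplit + 2 * A * |τ - t| / lam * htail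

theorem abs_deriv_plP_laguerreFracDeriv_le (hα : ∀ j, -1 < α j) (hlam : 0 < lam) (hlamβ : lam < β)
    (hβ : β ≤ 1) (hf : Measurable f) (hM : ∀ y ∈ posOrthant d, |f y| ≤ M)
    (hh : ∀ x ∈ posOrthant d, DerivLeRpow (fun t => poissonSemigroup α t f x) A β) (ht : 0 < t)
    (hx : x ∈ posOrthant d) :
    |deriv (fun u => plP d α u (laguerreFracDeriv d α lam f) x) t|
      ≤ |(fracDerivConst lam)⁻¹| *
        (2 * A * (1 / (1 - lam) + 1 / lam) * (t / 4) ^ (β - lam - 1)) := by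
  have hA0 : 0 ≤ A := (hh x hx).nonneg
  have hlam1 : lam < 1 := hlamβ.trans_le hβ
  have : 0 < 1 - lam := sub_pos.2 hlam1
  have hq : 0 < t / 4 := by positivity
  refine norm_deriv_le_of_lip' (𝕜 := ℝ) (F := ℝ) (by positivity) ?_
  filter_upwards [lt_mem_nhds (show 2 * (t / 4) < t by linarith)] with τ hτ
  have hτ0 : 0 < τ := by linarith
  rw [plP_laguerreFracDeriv hα hlam hlamβ hf hM hh hτ0 hx,
    plP_laguerreFracDeriv hα hlam hlamβ hf hM hh ht hx, ← mul_sub, ← integral_sub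
      (integrableOn_rpow_mul_increment hα hlam hlam1 hβ hf hM hτ0 hx (hh x hx))
      (integrableOn_rpow_mul_increment hα hlam hlam1 hβ hf hM ht hx (hh x hx)),
    norm_mul, Real.norm_eq_abs, Real.norm_eq_abs, Real.norm_eq_abs, mul_assoc]
  simp only [← mul_sub]
  exact mul_le_mul_of_nonneg_left (abs_integral_le_integral_abs.trans
    (integral_abs_rpow_mul_second_difference_le hα hlam hlam1 hβ hf hM hh hq hτ.le
      (by linarith) hx)) (abs_nonneg _)

end Lipschitz

theorem laguerreFracDeriv_bounded_on_lipschitz_general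
    (d : ℕ) (α : Fin d → ℝ) (hα : ∀ j, -1 < α j)
    (lam β : ℝ) (hlam : 0 < lam) (hlamβ : lam < β) (hβ : β ≤ 1) :
    ∃ C > 0, ∀ (f : (Fin d → ℝ) → ℝ) (M A : ℝ), Measurable f → (∀ y ∈ posOrthant d, |f y| ≤ M) →
      (∀ t > (0 : ℝ), ∀ x ∈ posOrthant d,
        |deriv (fun u => plP d α u f x) t| ≤ A * t ^ (β - 1)) →
      (∀ x ∈ posOrthant d, |laguerreFracDeriv d α lam f x| ≤ C * (M + A)) ∧
      (∀ t > (0 : ℝ), ∀ x ∈ posOrthant d,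
        |deriv (fun u => plP d α u (laguerreFracDeriv d α lam f) x) t| ≤
          C * (M + A) * t ^ (β - lam - 1)) := by
  have hβ0 : 0 < β := hlam.trans hlamβ
  have : 0 < β - lam := sub_pos.2 hlamβ
  have : 0 < 1 - lam := by linarith
  set c := |(fracDerivConst lam)⁻¹|
  set K₁ := c * (1 / β / (β - lam))
  set K₂ := c * (2 / lam)
  set K₃ := c * (2 * (1 / (1 - lam) + 1 / lam) * (1 / 4 : ℝ) ^ (β - lam - 1))
  refine ⟨K₁ + K₂ + K₃ + 1, by positivity, fun f M A hf hM hA => ?_⟩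
  have hh := fun x hx => derivLeRpow_poissonSemigroup hα hf hM hx fun t ht => hA t ht x hx
  have hone : (1 : Fin d → ℝ) ∈ posOrthant d := fun _ _ => mem_Ioi.2 one_pos
  have hA0 : 0 ≤ A := (hh 1 hone).nonneg
  have hM0 : 0 ≤ M := (abs_nonneg _).trans (hM 1 hone)
  constructor
  · intro x hx
    have : 0 ≤ (K₂ + K₃ + 1) * A + (K₁ + K₃ + 1) * M := by positivity
    linarith [abs_laguerreFracDeriv_le hα hlam hlamβ hf hM hx (hh x hx)]
  · intro t ht x hx
    have : 0 ≤ ((K₁ + K₂ + 1) * A + (K₁ + K₂ + K₃ + 1) * M) * t ^ (β - lam - 1) := by positivity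
    have hderiv := abs_deriv_plP_laguerreFracDeriv_le hα hlam hlamβ hβ hf hM hh ht hx
    rw [div_eq_mul_one_div t 4, Real.mul_rpow ht.le (by norm_num)] at hderiv
    linarith

theorem laguerreFracDeriv_bounded_on_lipschitz
    (d : ℕ) (hd : 1 ≤ d) (α : Fin d → ℝ) (hα : ∀ j, -(1 / 2 : ℝ) < α j)
    (lam β : ℝ) (hlam : 0 < lam) (hlamβ : lam < β) (hβ : β < 1) :
    ∃ C > 0, ∀ (f : (Fin d → ℝ) → ℝ) (M A : ℝ), Measurable f → (∀ y, |f y| ≤ M) →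
      (∀ t > (0 : ℝ), ∀ x ∈ posOrthant d,
        |deriv (fun u => plP d α u f x) t| ≤ A * t ^ (β - 1)) →
      (∀ x ∈ posOrthant d, |laguerreFracDeriv d α lam f x| ≤ C * (M + A)) ∧
      (∀ t > (0 : ℝ), ∀ x ∈ posOrthant d,
        |deriv (fun u => plP d α u (laguerreFracDeriv d α lam f) x) t| ≤
          C * (M + A) * t ^ (β - lam - 1)) := by
  obtain ⟨C, hC, h⟩ := laguerreFracDeriv_bounded_on_lipschitz_general d α
    (fun j => lt_trans (by norm_num) (hα j)) lam β hlam hlamβ hβ.le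
  exact ⟨C, hC, fun f M A hf hM => h f M A hf fun y _ => hM y⟩
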